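/- Let ω = (ω₁, ω₂, …) be a nondecreasing sequence of positive reals tending to +∞ and let (n_k) be a sequence of distinct positive integers satisfying Condition A_ω. Then for any f satisfying the stated conditions, N^{-1/2} Σ_{k=1}^N f(n_k x) converges in distribution to the normal law N(0, ‖f‖²) as N → ∞, where x is uniformly distributed on (0,1). -/

import Mathlib

/-!
The sums are compared with those of an independent model through moments of fixed order, and the
conclusion is drawn from Lévy's continuity theorem.

*Removing resonances.* Among the first `N` indices, those `k` for which `n k` is one of the
`disc N = ⌊N^{1/4}⌋` smallest elements of the sequence number at most `disc N`, so they contribute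
`O(N^{1/4})` to the sum and are negligible after division by `√N`. Condition `A_ω` applied at
`disc N` says that the remaining `n k` satisfy, for each fixed `R` and all large `N`, no nontrivial
linear relation of length at most `R` with coefficients bounded by `N ^ 4` (`nonRes_good`).

*Trigonometric polynomials.* For a real trigonometric polynomial `p` of mean zero, expanding the
`q`-th power of `∑ p (n k * x)` produces characters whose total frequency vanishes only when it
vanishes index by index. Hence the `q`-th moment equals that of `∑ p (u k)` with independent
uniform `u k` (`moment_eq`). Equality of the moments up to order `2 q` makes the characteristic
functions agree up to the `2 q`-th Taylor term (`charFun_compare`), which Hoeffding's inequality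
bounds by a quantity geometrically small in `q`, uniformly in `N` (`model_moment_le`). The classical
central limit theorem for the independent model then gives the limit (`trig_clt`).

*Functions of bounded variation.* The function `f` is split into its Fourier partial sum over
`[-T, T]`, the block `T < |j| ≤ N ^ 4` and the far tail. The far tail is small enough for the
triangle inequality, since the Fourier coefficients are `O(1 / |j|)` (`exists_tail_bound`,
`integral_far_le`). In the middle block the frequencies `j * n k` are pairwise distinct, so
orthogonality bounds the `L²` norm of the sum by `√N` times the `L²` norm of the block
(`integral_mid_le`). Letting `N → ∞` and then `T → ∞` yields the limit of the characteristic
functions (`charFun_tendsto`).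
-/

open MeasureTheory Filter Real Topology

noncomputable section

/-- `n k` is among the `N` smallest elements of the sequence `n`. -/
def AmongSmallest (n : ℕ → ℕ) (N : ℕ) (k : ℕ) : Prop :=
  {j : ℕ | n j ≤ n k}.ncard ≤ N

/-- Condition `A_ω` with explicit threshold `N₀`: for every `N ≥ N₀`, every solution of
`a₁ n_{k₁} + … + a_r n_{k_r} = 0` with `2 ≤ r ≤ ω_N`, pairwise distinct indices and nonzero
integer coefficients of absolute value at most `N ^ ω_N` has all `n_{k_i}` among the `N`
smallest elements of the sequence. -/
def CondAWith (ω : ℕ → ℝ) (n : ℕ → ℕ) (N₀ : ℕ) : Prop :=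
  ∀ N : ℕ, N₀ ≤ N →
    ∀ (r : ℕ) (k : Fin r → ℕ) (a : Fin r → ℤ),
      2 ≤ r → (r : ℝ) ≤ ω N →
      Function.Injective k →
      (∀ i, a i ≠ 0) →
      (∀ i, (|a i| : ℝ) ≤ (N : ℝ) ^ ω N) →
      (∑ i, a i * (n (k i) : ℤ)) = 0 →
      ∀ i, AmongSmallest n N (k i)

/-- Condition `A_ω`. -/
def CondA (ω : ℕ → ℝ) (n : ℕ → ℕ) : Prop := ∃ N₀, CondAWith ω n N₀

/-! ### Characters and orthogonality -/

/-- The uniform distribution on `(0, 1]`. -/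
abbrev unif : Measure ℝ := volume.restrict (Set.Ioc (0 : ℝ) 1)

instance unif_isProb : IsProbabilityMeasure unif := ⟨by simp [unif]⟩

/-- The character `x ↦ exp (2 π i a x)`. -/
def ee (a : ℤ) (x : ℝ) : ℂ := Complex.exp (2 * π * Complex.I * a * x)

lemma ee_zero (x : ℝ) : ee 0 x = 1 := by simp [ee]

lemma ee_add (a b : ℤ) (x : ℝ) : ee (a + b) x = ee a x * ee b x := by
  rw [ee, ee, ee, ← Complex.exp_add]; congr 1; push_cast; ring

lemma ee_sum {ι : Type*} (s : Finset ι) (a : ι → ℤ) (x : ℝ) :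
    ee (∑ i ∈ s, a i) x = ∏ i ∈ s, ee (a i) x := by
  classical
  induction s using Finset.induction_on with
  | empty => simp [ee_zero]
  | insert i s hi ih => rw [Finset.sum_insert hi, Finset.prod_insert hi, ee_add, ih]

lemma ee_natMul (a : ℤ) (m : ℕ) (x : ℝ) : ee a (m * x) = ee (a * m) x := by
  rw [ee, ee]; congr 1; push_cast; ring

lemma ee_eq_exp (a : ℤ) (x : ℝ) : ee a x = Complex.exp (((2 * π * a * x : ℝ) : ℂ) * Complex.I) := by
  rw [ee]; congr 1; push_cast; ring

lemma norm_ee (a : ℤ) (x : ℝ) : ‖ee a x‖ = 1 := by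
  rw [ee_eq_exp, Complex.norm_exp_ofReal_mul_I]

lemma conj_ee (a : ℤ) (x : ℝ) : (starRingEnd ℂ) (ee a x) = ee (-a) x := by
  rw [ee, ee, ← Complex.exp_conj]; congr 1; simp [Complex.conj_ofNat]

lemma continuous_ee (a : ℤ) : Continuous (ee a) := by
  unfold ee; fun_prop

lemma ee_add_one (a : ℤ) (x : ℝ) : ee a (x + 1) = ee a x := by
  have : ee a (x + 1) = ee a x * Complex.exp (a * (2 * π * Complex.I)) := by
    rw [ee, ee, ← Complex.exp_add]; congr 1; push_cast; ring
  rw [this, Complex.exp_int_mul_two_pi_mul_I, mul_one]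

lemma integrable_ee (a : ℤ) (μ : Measure ℝ) [IsFiniteMeasure μ] : Integrable (ee a) μ :=
  Integrable.of_bound (continuous_ee a).aestronglyMeasurable 1
    (Eventually.of_forall fun x => (norm_ee a x).le)

/-- A nontrivial character integrates to zero over each of its periods. -/
lemma integral_ee_period (a : ℤ) (ha : a ≠ 0) (s : ℝ) :
    ∫ x in s..(s + 1 / (a : ℝ)), ee a x = 0 := by
  have hc : (2 * π * Complex.I * a : ℂ) ≠ 0 := by
    have : (a : ℂ) ≠ 0 := by exact_mod_cast ha
    simp [this, Real.pi_ne_zero]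
  have haR : (a : ℂ) ≠ 0 := by exact_mod_cast ha
  unfold ee
  rw [integral_exp_mul_complex hc]
  have : (2 * π * Complex.I * a * ((s + 1 / (a : ℝ) : ℝ) : ℂ) : ℂ)
      = 2 * π * Complex.I * a * s + 2 * π * Complex.I := by
    push_cast; field_simp
  rw [this, Complex.exp_add, Complex.exp_two_pi_mul_I]; simp

lemma integral_ee (a : ℤ) : ∫ x, ee a x ∂unif = if a = 0 then 1 else 0 := by
  split_ifs with h
  · subst h; simp [ee_zero]
  · have hc : (2 * π * Complex.I * a : ℂ) ≠ 0 := by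
      have : (a : ℂ) ≠ 0 := by exact_mod_cast h
      simp [this, Real.pi_ne_zero]
    rw [unif, ← intervalIntegral.integral_of_le zero_le_one]
    unfold ee
    rw [integral_exp_mul_complex hc]
    have : (2 * π * Complex.I * a * ((1 : ℝ) : ℂ) : ℂ) = a * (2 * π * Complex.I) := by
      push_cast; ring
    rw [this, Complex.exp_int_mul_two_pi_mul_I]; simp

/-- The uniform distribution is invariant under `x ↦ m x mod 1`. -/
lemma integral_comp_natMul (h : ℝ → ℝ) (hper : ∀ x, h (x + 1) = h x)
    (hint : ∀ a b, IntervalIntegrable h volume a b) (m : ℕ) (hm : 0 < m) :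
    ∫ x, h (m * x) ∂unif = ∫ x, h x ∂unif := by
  have hm' : (m : ℝ) ≠ 0 := by positivity
  rw [unif, ← intervalIntegral.integral_of_le zero_le_one,
    ← intervalIntegral.integral_of_le zero_le_one]
  rw [intervalIntegral.integral_comp_mul_left h hm']
  have hp : Function.Periodic h 1 := hper
  have := hp.intervalIntegral_add_zsmul_eq (m : ℤ) 0 hint
  simp only [zero_add, zsmul_eq_mul, mul_one, Int.cast_natCast] at this
  rw [mul_zero, mul_one, this]
  simp [hm']

/-- Orthogonality of distinct characters. -/
lemma integral_normSq_sum {ι : Type*} (s : Finset ι) (φ : ι → ℤ) (hφ : Set.InjOn φ s) (d : ι → ℂ) :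
    ∫ x, ‖∑ i ∈ s, d i * ee (φ i) x‖ ^ 2 ∂unif = ∑ i ∈ s, ‖d i‖ ^ 2 := by
  classical
  have key : ∀ x, ((‖∑ i ∈ s, d i * ee (φ i) x‖ ^ 2 : ℝ) : ℂ)
      = ∑ i ∈ s, ∑ j ∈ s, (d i * (starRingEnd ℂ) (d j)) * ee (φ i - φ j) x := by
    intro x
    push_cast
    rw [← Complex.mul_conj', map_sum, Finset.sum_mul_sum]
    refine Finset.sum_congr rfl fun i _ => Finset.sum_congr rfl fun j _ => ?_
    rw [map_mul, conj_ee, sub_eq_add_neg, ee_add]; ring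
  have hI : ∀ i j, Integrable (fun x => (d i * (starRingEnd ℂ) (d j)) * ee (φ i - φ j) x) unif :=
    fun i j => (integrable_ee _ _).const_mul _
  have : ((∫ x, ‖∑ i ∈ s, d i * ee (φ i) x‖ ^ 2 ∂unif : ℝ) : ℂ)
      = ((∑ i ∈ s, ‖d i‖ ^ 2 : ℝ) : ℂ) := by
    rw [← integral_complex_ofReal]
    simp_rw [key]
    rw [integral_finsetSum _ fun i _ => integrable_finsetSum _ fun j _ => hI i j]
    push_cast
    refine Finset.sum_congr rfl fun i hi => ?_
    rw [integral_finsetSum _ fun j _ => hI i j]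
    rw [Finset.sum_eq_single_of_mem i hi]
    · rw [integral_const_mul, integral_ee, if_pos (sub_self _), mul_one, Complex.mul_conj']
    · intro j hj hji
      rw [integral_const_mul, integral_ee, if_neg, mul_zero]
      intro h
      exact hji (hφ hj hi (by linarith))
  exact_mod_cast this

/-! ### Fourier coefficients of functions of bounded variation -/

/-- The `j`-th Fourier coefficient of `f`. -/
def fc (f : ℝ → ℝ) (j : ℤ) : ℂ := ∫ x, (f x : ℂ) * ee (-j) x ∂unif

/-- The Fourier partial sum of `f` over the finite set of frequencies `J`. -/
def fs (f : ℝ → ℝ) (J : Finset ℤ) (x : ℝ) : ℂ := ∑ j ∈ J, fc f j * ee j x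

lemma continuous_fs (f : ℝ → ℝ) (J : Finset ℤ) : Continuous (fs f J) := by
  unfold fs
  exact continuous_finsetSum _ fun j _ => continuous_const.mul (continuous_ee j)

lemma conj_fc (f : ℝ → ℝ) (j : ℤ) : (starRingEnd ℂ) (fc f j) = fc f (-j) := by
  rw [fc, fc, ← integral_conj]
  simp [conj_ee]

lemma integrable_of_bdd {f : ℝ → ℝ} (hf : Measurable f) {K : ℝ} (hK : ∀ x, |f x| ≤ K)
    (μ : Measure ℝ) [IsFiniteMeasure μ] : Integrable f μ :=
  Integrable.of_bound hf.aestronglyMeasurable K (Eventually.of_forall hK)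

lemma hasSum_fc {f : ℝ → ℝ} (hf : Measurable f) {K : ℝ} (hK : ∀ x, |f x| ≤ K) :
    HasSum (fun j => ‖fc f j‖ ^ 2) (∫ x, f x ^ 2 ∂unif) := by
  have hm : MemLp (fun x => (f x : ℂ)) 2 (volume.restrict (Set.Ioc (0 : ℝ) 1)) :=
    MemLp.of_bound (Complex.measurable_ofReal.comp hf).aestronglyMeasurable K
      (Eventually.of_forall fun x => by simpa using hK x)
  have h := hasSum_sq_fourierCoeffOn (zero_lt_one) hm
  have e1 : ∀ j, fourierCoeffOn zero_lt_one (fun x => (f x : ℂ)) j = fc f j := by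
    intro j
    rw [fourierCoeffOn_eq_integral, fc, unif, ← intervalIntegral.integral_of_le zero_le_one]
    simp only [sub_zero, div_one, one_smul]
    refine intervalIntegral.integral_congr fun x _ => ?_
    simp only [smul_eq_mul]
    rw [fourier_coe_apply, mul_comm, ee]
    congr 2
    push_cast; ring
  simp only [e1] at h
  rw [intervalIntegral.integral_of_le zero_le_one] at h
  simpa using h

/-- Pythagoras for a Fourier partial sum. -/
lemma integral_normSq_sub_fs {f : ℝ → ℝ} (hf : Measurable f) {K : ℝ} (hK : ∀ x, |f x| ≤ K)
    (J : Finset ℤ) :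
    ∫ x, ‖(f x : ℂ) - fs f J x‖ ^ 2 ∂unif = ∫ x, f x ^ 2 ∂unif - ∑ j ∈ J, ‖fc f j‖ ^ 2 := by
  have hfC : Measurable fun x => (f x : ℂ) := Complex.measurable_ofReal.comp hf
  have hprod : ∀ j, Integrable (fun x => (f x : ℂ) * ee (-j) x) unif := fun j =>
    Integrable.of_bound (hfC.mul (continuous_ee _).measurable).aestronglyMeasurable K
      (Eventually.of_forall fun x => by simpa [norm_ee] using hK x)
  have hcross : ∫ x, (f x : ℂ) * (starRingEnd ℂ) (fs f J x) ∂unif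
      = ((∑ j ∈ J, ‖fc f j‖ ^ 2 : ℝ) : ℂ) := by
    have : ∀ x, (f x : ℂ) * (starRingEnd ℂ) (fs f J x)
        = ∑ j ∈ J, (starRingEnd ℂ) (fc f j) * ((f x : ℂ) * ee (-j) x) := by
      intro x
      rw [fs, map_sum, Finset.mul_sum]
      refine Finset.sum_congr rfl fun j _ => ?_
      rw [map_mul, conj_ee]; ring
    simp_rw [this]
    rw [integral_finsetSum _ fun j _ => (hprod j).const_mul _]
    push_cast
    refine Finset.sum_congr rfl fun j _ => ?_
    rw [integral_const_mul, ← fc, mul_comm, Complex.mul_conj']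
  have hsq : ∫ x, ‖fs f J x‖ ^ 2 ∂unif = ∑ j ∈ J, ‖fc f j‖ ^ 2 :=
    integral_normSq_sum J (fun j => j) (fun a _ b _ h => h) (fc f)
  have hfsb : ∀ x, ‖fs f J x‖ ≤ ∑ j ∈ J, ‖fc f j‖ := fun x =>
    (norm_sum_le _ _).trans (Finset.sum_le_sum fun j _ => by simp [norm_ee])
  have hi1 : Integrable (fun x => f x ^ 2) unif :=
    integrable_of_bdd (K := K ^ 2) (hf.pow_const 2)
      (fun x => by rw [abs_pow]; exact pow_le_pow_left₀ (abs_nonneg _) (hK x) 2) _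
  have hi2 : Integrable (fun x => ‖fs f J x‖ ^ 2) unif :=
    Integrable.of_bound ((continuous_fs f J).norm.pow 2).aestronglyMeasurable
      ((∑ j ∈ J, ‖fc f j‖) ^ 2) (Eventually.of_forall fun x => by
        rw [norm_pow, norm_norm]; exact pow_le_pow_left₀ (norm_nonneg _) (hfsb x) 2)
  have hi3 : Integrable (fun x => (f x : ℂ) * (starRingEnd ℂ) (fs f J x)) unif :=
    Integrable.of_bound (hfC.mul
      (Complex.continuous_conj.comp (continuous_fs f J)).measurable).aestronglyMeasurable
      (K * ∑ j ∈ J, ‖fc f j‖) (Eventually.of_forall fun x => by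
        rw [norm_mul, RCLike.norm_conj]
        have := hK x
        exact mul_le_mul (by simpa using hK x) (hfsb x) (norm_nonneg _)
          ((abs_nonneg _).trans (hK x)))
  have hpt : ∀ x, ‖(f x : ℂ) - fs f J x‖ ^ 2
      = f x ^ 2 + ‖fs f J x‖ ^ 2 - 2 * ((f x : ℂ) * (starRingEnd ℂ) (fs f J x)).re := by
    intro x
    rw [← Complex.normSq_eq_norm_sq, Complex.normSq_sub, Complex.normSq_eq_norm_sq,
      Complex.normSq_eq_norm_sq, Complex.norm_real, Real.norm_eq_abs, sq_abs]
  have hre : ∫ x, ((f x : ℂ) * (starRingEnd ℂ) (fs f J x)).re ∂unif = ∑ j ∈ J, ‖fc f j‖ ^ 2 := by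
    have := integral_re hi3
    simp only [RCLike.re_eq_complex_re] at this
    rw [this, hcross, Complex.ofReal_re]
  have hi4 : Integrable (fun x => 2 * ((f x : ℂ) * (starRingEnd ℂ) (fs f J x)).re) unif :=
    hi3.re.const_mul 2
  have hi5 : Integrable (fun x => f x ^ 2 + ‖fs f J x‖ ^ 2) unif := hi1.add hi2
  simp_rw [hpt]
  rw [integral_sub hi5 hi4, integral_add hi1 hi2, integral_const_mul,
    hsq, hre]
  ring

/-- Splitting `[0, 1]` into `m` equal parts does not increase the total variation. -/
lemma sum_eVariationOn_le (f : ℝ → ℝ) (m : ℕ) (hm : 0 < m) (i : ℕ) (hi : i ≤ m) :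
    ∑ l ∈ Finset.range i, eVariationOn f (Set.Icc ((l : ℝ) / m) ((l + 1 : ℕ) / m))
      ≤ eVariationOn f (Set.Icc 0 ((i : ℝ) / m)) := by
  have hm' : (0 : ℝ) < m := by positivity
  induction i with
  | zero => simp
  | succ i ih =>
    rw [Finset.sum_range_succ]
    have h := eVariationOn.Icc_add_Icc f (s := Set.univ) (a := 0) (b := (i : ℝ) / m)
      (c := ((i + 1 : ℕ) : ℝ) / m) (by positivity)
      (by gcongr; simp) (Set.mem_univ _)
    simp only [Set.univ_inter] at h
    rw [← h]
    gcongr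
    exact ih (by omega)

/-- Fourier coefficients of a function of bounded variation are `O(1/|j|)`: over each period of
the character, `f` may be replaced by its oscillation. -/
lemma norm_fc_le {f : ℝ → ℝ} (hf : Measurable f) {K : ℝ} (hK : ∀ x, |f x| ≤ K)
    (hbv : BoundedVariationOn f (Set.Icc 0 1)) (m : ℕ) (hm : 0 < m) :
    ‖fc f m‖ ≤ (eVariationOn f (Set.Icc 0 1)).toReal / m := by
  have hm' : (0 : ℝ) < m := by positivity
  have hfC : Measurable fun x => (f x : ℂ) := Complex.measurable_ofReal.comp hf
  have hprod : ∀ a b, IntervalIntegrable (fun x => (f x : ℂ) * ee (-m) x) volume a b := fun a b => by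
    have : IsFiniteMeasure (volume.restrict (Set.uIoc a b)) := ⟨by simp [Set.uIoc]⟩
    exact intervalIntegrable_iff.2 <|
      Integrable.of_bound (hfC.mul (continuous_ee _).measurable).aestronglyMeasurable K
        (Eventually.of_forall fun x => by simpa [norm_ee] using hK x)
  set a : ℕ → ℝ := fun l => (l : ℝ) / m with ha
  have hmono : ∀ l, a l ≤ a (l + 1) := fun l => by simp only [ha]; gcongr; simp
  have hlen : ∀ l, a (l + 1) = a l + 1 / m := fun l => by
    simp only [ha]; push_cast; ring
  have hsplit : fc f m = ∑ l ∈ Finset.range m,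
      ∫ x in (a l)..(a (l + 1)), (f x : ℂ) * ee (-m) x := by
    rw [intervalIntegral.sum_integral_adjacent_intervals fun l _ => hprod _ _, fc, unif,
      ← intervalIntegral.integral_of_le zero_le_one]
    simp [ha, hm'.ne']
  have hsub : ∀ l, l < m → Set.Icc (a l) (a (l + 1)) ⊆ Set.Icc 0 1 := by
    intro l hl
    apply Set.Icc_subset_Icc
    · simp only [ha]; positivity
    · simp only [ha]; rw [div_le_one hm']; exact_mod_cast hl
  have hterm : ∀ l ∈ Finset.range m,
      ‖∫ x in (a l)..(a (l + 1)), (f x : ℂ) * ee (-m) x‖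
        ≤ (eVariationOn f (Set.Icc (a l) (a (l + 1)))).toReal * (1 / m) := by
    intro l hl
    have hl := Finset.mem_range.1 hl
    have hz : ∫ x in (a l)..(a (l + 1)), ee (-m) x = 0 := by
      have := integral_ee_period (-m) (by omega) (a (l + 1))
      have e : a (l + 1) + 1 / ((-m : ℤ) : ℝ) = a l := by
        rw [hlen]; push_cast; field_simp; ring
      rw [e] at this
      rw [intervalIntegral.integral_symm, this, neg_zero]
    have e2 : ∫ x in (a l)..(a (l + 1)), (f x : ℂ) * ee (-m) x
        = ∫ x in (a l)..(a (l + 1)), ((f x : ℂ) - f (a l)) * ee (-m) x := by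
      simp_rw [sub_mul]
      rw [intervalIntegral.integral_sub (hprod _ _)
        (((continuous_ee _).const_mul _ |>.intervalIntegrable _ _)),
        intervalIntegral.integral_const_mul, hz, mul_zero, sub_zero]
    rw [e2]
    have hb := intervalIntegral.norm_integral_le_of_norm_le_const (a := a l) (b := a (l + 1))
      (f := fun x => ((f x : ℂ) - f (a l)) * ee (-m) x)
      (C := (eVariationOn f (Set.Icc (a l) (a (l + 1)))).toReal) (by
        intro x hx
        rw [Set.uIoc_of_le (hmono l)] at hx
        rw [norm_mul, norm_ee, mul_one, ← Complex.ofReal_sub, Complex.norm_real, ← dist_eq_norm]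
        exact (hbv.mono (hsub l hl)).dist_le ⟨hx.1.le, hx.2⟩ ⟨le_rfl, hmono l⟩)
    refine hb.trans (le_of_eq ?_)
    rw [hlen, add_sub_cancel_left, abs_of_nonneg (by positivity)]
  rw [hsplit]
  refine (norm_sum_le _ _).trans ((Finset.sum_le_sum hterm).trans ?_)
  rw [← Finset.sum_mul, div_eq_mul_one_div (eVariationOn f (Set.Icc 0 1)).toReal]
  gcongr
  rw [← ENNReal.toReal_sum fun l hl => hbv.mono (hsub l (Finset.mem_range.1 hl))]
  apply ENNReal.toReal_mono hbv
  have := sum_eVariationOn_le f m hm m le_rfl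
  rwa [div_self hm'.ne'] at this

/-- The symmetric frequency window `[-T, T]`. -/
abbrev win (T : ℕ) : Finset ℤ := Finset.Icc (-(T : ℤ)) T

/-- Polynomial rate of `L²` approximation of a function of bounded variation by its Fourier
partial sums. The rate `T^{-1/2}` is not optimal, but a polynomial rate is
all that is needed. -/
lemma exists_tail_bound {f : ℝ → ℝ} (hf : Measurable f) {K : ℝ} (hK : ∀ x, |f x| ≤ K)
    (hbv : BoundedVariationOn f (Set.Icc 0 1)) :
    ∃ C : ℝ, 0 ≤ C ∧ ∀ T : ℕ, 0 < T →
      ∫ x, f x ^ 2 ∂unif - ∑ j ∈ win T, ‖fc f j‖ ^ 2 ≤ C / √T := by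
  set V := (eVariationOn f (Set.Icc 0 1)).toReal with hV
  have hdec : ∀ j : ℤ, j ≠ 0 → ‖fc f j‖ ≤ V / |(j : ℝ)| := by
    intro j hj
    rcases Int.natAbs_eq j with h | h
    · have := norm_fc_le hf hK hbv j.natAbs (by omega)
      rw [← h] at this
      rwa [Nat.cast_natAbs, Int.cast_abs] at this
    · have := norm_fc_le hf hK hbv j.natAbs (by omega)
      rw [show ((j.natAbs : ℕ) : ℤ) = -j by omega, ← conj_fc, RCLike.norm_conj] at this
      rwa [Nat.cast_natAbs, Int.cast_abs] at this
  have hsum : Summable fun j : ℤ => V ^ 2 * |(j : ℝ)| ^ (-(3 / 2) : ℝ) := by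
    apply Summable.mul_left
    exact Real.summable_abs_int_rpow (by norm_num)
  refine ⟨∑' j : ℤ, V ^ 2 * |(j : ℝ)| ^ (-(3 / 2) : ℝ),
    tsum_nonneg fun j => by positivity, fun T hT => ?_⟩
  have hT' : (0 : ℝ) < T := by positivity
  have hs := hasSum_fc hf hK
  rw [sub_le_iff_le_add]
  refine hasSum_le_of_sum_le hs fun s => ?_
  have hb : ∀ j ∈ s \ win T, ‖fc f j‖ ^ 2 ≤ V ^ 2 * |(j : ℝ)| ^ (-(3 / 2) : ℝ) / √T := by
    intro j hj
    have hj2 : (T : ℤ) ≤ |j| := by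
      have := (Finset.mem_sdiff.1 hj).2
      rw [Finset.mem_Icc, not_and_or] at this
      rcases this with h | h
      · rw [abs_of_nonpos (by omega)]; omega
      · rw [abs_of_nonneg (by omega)]; omega
    have hjT : (T : ℝ) ≤ |(j : ℝ)| := by exact_mod_cast hj2
    have hj0 : (0 : ℝ) < |(j : ℝ)| := hT'.trans_le hjT
    have hjne : j ≠ 0 := by rintro rfl; simp at hj0
    have h1 : |(j : ℝ)| ^ (-(3 / 2) : ℝ) = |(j : ℝ)| ^ (-2 : ℝ) * √|(j : ℝ)| := by
      rw [Real.sqrt_eq_rpow, ← Real.rpow_add hj0]; norm_num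
    have h2 : |(j : ℝ)| ^ (-2 : ℝ) = 1 / |(j : ℝ)| ^ 2 := by
      rw [Real.rpow_neg hj0.le, one_div]; norm_num
    have hsq : √(T : ℝ) ≤ √|(j : ℝ)| := Real.sqrt_le_sqrt hjT
    have hsqT : 0 < √(T : ℝ) := Real.sqrt_pos.2 hT'
    rw [le_div_iff₀ hsqT, h1, h2]
    calc ‖fc f j‖ ^ 2 * √(T : ℝ) ≤ (V / |(j : ℝ)|) ^ 2 * √|(j : ℝ)| := by
          gcongr
          exact hdec j hjne
      _ = _ := by rw [div_pow]; ring
  calc ∑ j ∈ s, ‖fc f j‖ ^ 2 ≤ ∑ j ∈ s \ win T, ‖fc f j‖ ^ 2 + ∑ j ∈ win T, ‖fc f j‖ ^ 2 := by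
        rw [← Finset.sum_inter_add_sum_sdiff s (win T), add_comm]
        gcongr
        exact Finset.inter_subset_right
    _ ≤ _ := by
        gcongr
        refine (Finset.sum_le_sum hb).trans ?_
        rw [← Finset.sum_div]
        gcongr
        exact hsum.sum_le_tsum _ fun j _ => by positivity

/-! ### Moments in the absence of resonances -/

/-- The integers `n k`, `k ∈ I`, satisfy no nontrivial linear relation with at most `R` nonzero
coefficients, all bounded by `L`. -/
def NonRes (n : ℕ → ℕ) (I : Finset ℕ) (R L : ℕ) : Prop :=
  ∀ b : ℕ → ℤ, (I.filter fun k => b k ≠ 0).card ≤ R → (∀ k ∈ I, |b k| ≤ L) →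
    ∑ k ∈ I, b k * (n k : ℤ) = 0 → ∀ k ∈ I, b k = 0

/-- The product probability space carrying independent uniform coordinates. -/
abbrev unifProd : Measure (ℕ → ℝ) := Measure.infinitePi fun _ : ℕ => unif

/-- Total frequency carried by the index `k` in a product of `q` characters. -/
def freq {q : ℕ} (v : Fin q → ℕ × ℤ) (k : ℕ) : ℤ :=
  ∑ i ∈ Finset.univ.filter (fun i => (v i).1 = k), (v i).2

/-- Expansion of the `q`-th power of a sum of trigonometric polynomials in the variables `Y k`, with
the characters grouped by the index `k`. -/
lemma moment_expand {Ω : Type*} {mΩ : MeasurableSpace Ω} (μ : Measure Ω) [IsProbabilityMeasure μ]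
    (Y : ℕ → Ω → ℝ) (hY : ∀ k, Measurable (Y k)) (I : Finset ℕ) (J : Finset ℤ) (c : ℤ → ℂ) (q : ℕ) :
    ∫ w, (∑ k ∈ I, ∑ j ∈ J, c j * ee j (Y k w)) ^ q ∂μ
      = ∑ v ∈ Fintype.piFinset fun _ : Fin q => I ×ˢ J,
          (∏ i, c (v i).2) * ∫ w, ∏ k ∈ I, ee (freq v k) (Y k w) ∂μ := by
  have hpt : ∀ w, (∑ k ∈ I, ∑ j ∈ J, c j * ee j (Y k w)) ^ q
      = ∑ v ∈ Fintype.piFinset fun _ : Fin q => I ×ˢ J,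
          (∏ i, c (v i).2) * ∏ k ∈ I, ee (freq v k) (Y k w) := by
    intro w
    rw [← Finset.sum_product' I J fun k j => c j * ee j (Y k w), Finset.sum_pow']
    refine Finset.sum_congr rfl fun v hv => ?_
    rw [Finset.prod_mul_distrib]
    congr 1
    have hmap : ∀ i ∈ (Finset.univ : Finset (Fin q)), (v i).1 ∈ I := fun i _ =>
      (Finset.mem_product.1 (Fintype.mem_piFinset.1 hv i)).1
    rw [← Finset.prod_fiberwise_of_maps_to hmap]
    refine Finset.prod_congr rfl fun k _ => ?_
    rw [freq, ee_sum]
    refine Finset.prod_congr rfl fun i hi => ?_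
    rw [(Finset.mem_filter.1 hi).2]
  simp_rw [hpt]
  rw [integral_finsetSum]
  · simp_rw [integral_const_mul]
  · intro v _
    refine Integrable.const_mul (Integrable.of_bound (C := 1) ?_ ?_) _
    · exact (Finset.measurable_fun_prod _ fun k _ =>
        (continuous_ee _).measurable.comp (hY k)).aestronglyMeasurable
    · exact Eventually.of_forall fun w => by simp [norm_prod, norm_ee]

lemma integral_unifProd_prod (I : Finset ℕ) (b : ℕ → ℤ) :
    ∫ u, ∏ k ∈ I, ee (b k) (u k) ∂unifProd = ∏ k ∈ I, ∫ x, ee (b k) x ∂unif := by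
  have h := integral_restrict_infinitePi (fun _ : ℕ => unif) (s := I)
    (f := fun y : I → ℝ => ∏ k : I, ee (b k) (y k)) (by
      exact (continuous_finsetProd _ fun k _ =>
        (continuous_ee _).comp (continuous_apply k)).aestronglyMeasurable)
  rw [integral_fintype_prod_eq_prod (fun (k : I) x => ee (b k) x)] at h
  rw [← Finset.prod_coe_sort I (fun k => ∫ x, ee (b k) x ∂unif), ← h]
  congr 1
  ext u
  rw [← Finset.prod_coe_sort I (fun k => ee (b k) (u k))]
  rfl

/-- In the absence of resonances of length at most `q`, the `q`-th moment of a sum of dilates of a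
trigonometric polynomial coincides with the one of the corresponding sum of independent
variables. -/
lemma moment_eq {n : ℕ → ℕ} {I : Finset ℕ} {q L T : ℕ} (h : NonRes n I q L) (J : Finset ℤ)
    (hJ : ∀ j ∈ J, |j| ≤ T) (hL : q * T ≤ L) (c : ℤ → ℂ) :
    ∫ x, (∑ k ∈ I, ∑ j ∈ J, c j * ee j (n k * x)) ^ q ∂unif
      = ∫ u, (∑ k ∈ I, ∑ j ∈ J, c j * ee j (u k)) ^ q ∂unifProd := by
  rw [moment_expand unif (fun k x => n k * x) (fun k => by fun_prop),
    moment_expand unifProd (fun k u => u k) (fun k => by fun_prop)]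
  refine Finset.sum_congr rfl fun v hv => ?_
  congr 1
  rw [integral_unifProd_prod]
  have hv' := fun i => Finset.mem_product.1 (Fintype.mem_piFinset.1 hv i)
  have e1 : ∀ x : ℝ, ∏ k ∈ I, ee (freq v k) (n k * x) = ee (∑ k ∈ I, freq v k * (n k : ℤ)) x := by
    intro x
    rw [ee_sum]
    exact Finset.prod_congr rfl fun k _ => ee_natMul _ _ _
  simp_rw [e1, integral_ee]
  rw [Finset.prod_ite_zero]
  simp only [Finset.prod_const_one]
  refine if_congr ⟨fun h0 => ?_, fun h0 => ?_⟩ rfl rfl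
  · refine h _ ?_ ?_ h0
    · have : (I.filter fun k => freq v k ≠ 0) ⊆ Finset.univ.image fun i => (v i).1 := by
        intro k hk
        by_contra hne
        apply (Finset.mem_filter.1 hk).2
        rw [freq, Finset.filter_false_of_mem, Finset.sum_empty]
        intro i _ hi
        exact hne (Finset.mem_image.2 ⟨i, Finset.mem_univ _, hi⟩)
      refine (Finset.card_le_card this).trans (Finset.card_image_le.trans ?_)
      simp
    · intro k _
      refine (Finset.abs_sum_le_sum_abs _ _).trans ?_
      refine (Finset.sum_le_card_nsmul _ _ (T : ℤ) fun i _ => hJ _ (hv' i).2).trans ?_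
      have hc : (Finset.univ.filter fun i => (v i).1 = k).card ≤ q :=
        (Finset.card_filter_le _ _).trans (by simp)
      rw [nsmul_eq_mul]
      have := (Nat.mul_le_mul_right T hc).trans hL
      exact_mod_cast this
  · exact Finset.sum_eq_zero fun k hk => by rw [h0 k hk, zero_mul]

/-! ### Comparison of characteristic functions through moments -/

/-- Taylor bound for the exponential on the imaginary axis. -/
lemma norm_exp_I_sub_le (m : ℕ) (y : ℝ) :
    ‖Complex.exp (y * Complex.I) - ∑ j ∈ Finset.range m, (y * Complex.I) ^ j / (j.factorial : ℂ)‖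
      ≤ |y| ^ m / m.factorial := by
  -- the case `0 ≤ y` suffices, by complex conjugation
  suffices H : ∀ m : ℕ, ∀ y : ℝ, 0 ≤ y → ‖Complex.exp (y * Complex.I)
      - ∑ j ∈ Finset.range m, (y * Complex.I) ^ j / (j.factorial : ℂ)‖ ≤ y ^ m / m.factorial by
    rcases le_total 0 y with hy | hy
    · rw [abs_of_nonneg hy]; exact H m y hy
    · rw [abs_of_nonpos hy, ← RCLike.norm_conj]
      refine le_trans (le_of_eq ?_) (H m (-y) (by linarith))
      congr 1
      simp [← Complex.exp_conj, map_sub, map_sum]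
  intro m
  induction m with
  | zero => intro y _; simp [Complex.norm_exp_ofReal_mul_I]
  | succ m ih =>
    intro y hy
    set F : ℕ → ℝ → ℂ := fun m y => Complex.exp (y * Complex.I)
      - ∑ j ∈ Finset.range m, (y * Complex.I) ^ j / (j.factorial : ℂ) with hF
    have hd0 : ∀ y : ℝ, HasDerivAt (fun y : ℝ => (y : ℂ) * Complex.I) Complex.I y := fun y => by
      simpa using (Complex.ofRealCLM.hasDerivAt (x := y)).mul_const Complex.I
    have hderiv : ∀ y : ℝ, HasDerivAt (F (m + 1)) (Complex.I * F m y) y := by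
      intro y
      have h1 := (hd0 y).cexp
      have h2 : HasDerivAt (fun y : ℝ => ∑ j ∈ Finset.range (m + 1),
          ((y : ℂ) * Complex.I) ^ j / (j.factorial : ℂ))
          (∑ j ∈ Finset.range (m + 1),
            (j * ((y : ℂ) * Complex.I) ^ (j - 1) * Complex.I) / (j.factorial : ℂ)) y :=
        HasDerivAt.fun_sum fun j _ => ((hd0 y).pow j).div_const _
      refine (h1.sub h2).congr_deriv ?_
      rw [hF, Finset.sum_range_succ']
      simp only [mul_sub, Finset.mul_sum]
      rw [mul_comm]
      congr 1
      simp only [Nat.cast_zero, zero_mul, zero_div, add_zero, Nat.add_sub_cancel]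
      refine Finset.sum_congr rfl fun j _ => ?_
      rw [Nat.factorial_succ]
      have : ((j + 1 : ℕ) : ℂ) ≠ 0 := by exact_mod_cast Nat.succ_ne_zero j
      have h' : ((j.factorial : ℕ) : ℂ) ≠ 0 := by exact_mod_cast Nat.factorial_ne_zero j
      push_cast at this ⊢
      field_simp
    have hBd : ∀ y : ℝ, HasDerivAt (fun y : ℝ => y ^ (m + 1) / ((m + 1).factorial : ℝ))
        (y ^ m / (m.factorial : ℝ)) y := by
      intro y
      refine ((hasDerivAt_pow (m + 1) y).div_const _).congr_deriv ?_
      rw [Nat.factorial_succ]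
      have : ((m.factorial : ℕ) : ℝ) ≠ 0 := by exact_mod_cast Nat.factorial_ne_zero m
      push_cast
      field_simp
    refine image_norm_le_of_norm_deriv_right_le_deriv_boundary (a := 0) (b := y)
      (f := F (m + 1)) (f' := fun y => Complex.I * F m y)
      (fun z _ => (hderiv z).continuousAt.continuousWithinAt)
      (fun z _ => (hderiv z).hasDerivWithinAt) (B := fun y => y ^ (m + 1) / ((m + 1).factorial : ℝ))
      (B' := fun y => y ^ m / (m.factorial : ℝ)) ?_ hBd ?_ ⟨hy, le_rfl⟩
    · simp [hF, Finset.sum_range_succ']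
    · intro z hz
      rw [norm_mul, Complex.norm_I, one_mul]
      exact ih z hz.1

/-- The even order makes the Taylor remainder an honest moment, without absolute values. -/
lemma charFun_taylor {Ω : Type*} {mΩ : MeasurableSpace Ω} (μ : Measure Ω) [IsProbabilityMeasure μ]
    (A : Ω → ℝ) (hA : Measurable A) (K : ℝ) (hAK : ∀ w, |A w| ≤ K) (q : ℕ) :
    ‖∫ w, Complex.exp (A w * Complex.I) ∂μ - ∑ j ∈ Finset.range (2 * q),
        ((∫ w, A w ^ j ∂μ : ℝ) : ℂ) * (Complex.I ^ j / (j.factorial : ℂ))‖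
      ≤ (∫ w, A w ^ (2 * q) ∂μ) / (2 * q).factorial := by
  have hint : ∀ j, Integrable (fun w => A w ^ j) μ := fun j =>
    Integrable.of_bound (hA.pow_const j).aestronglyMeasurable (K ^ j)
      (Eventually.of_forall fun w => by
        rw [norm_pow]; exact pow_le_pow_left₀ (norm_nonneg _) (hAK w) j)
  have hAC : Measurable fun w => (A w : ℂ) := Complex.measurable_ofReal.comp hA
  have hexp : Integrable (fun w => Complex.exp (A w * Complex.I)) μ :=
    Integrable.of_bound (by fun_prop) 1
      (Eventually.of_forall fun w => by rw [Complex.norm_exp_ofReal_mul_I])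
  have hterm : ∀ j, Integrable (fun w => ((A w : ℂ) * Complex.I) ^ j / (j.factorial : ℂ)) μ := by
    intro j
    have := ((hint j).ofReal (𝕜 := ℂ)).mul_const (Complex.I ^ j / (j.factorial : ℂ))
    refine this.congr (Eventually.of_forall fun w => ?_)
    simp only [RCLike.ofReal_pow, Complex.coe_algebraMap, mul_pow]
    simp [mul_div_assoc]
  have e : ∑ j ∈ Finset.range (2 * q),
      ((∫ w, A w ^ j ∂μ : ℝ) : ℂ) * (Complex.I ^ j / (j.factorial : ℂ))
      = ∫ w, ∑ j ∈ Finset.range (2 * q), ((A w : ℂ) * Complex.I) ^ j / (j.factorial : ℂ) ∂μ := by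
    rw [integral_finsetSum _ fun j _ => hterm j]
    refine Finset.sum_congr rfl fun j _ => ?_
    rw [← integral_complex_ofReal, ← integral_mul_const]
    congr 1
    ext w
    push_cast
    rw [mul_pow, mul_div_assoc]
  rw [e, ← integral_sub hexp (integrable_finsetSum _ fun j _ => hterm j), ← integral_div]
  refine norm_integral_le_of_norm_le ((hint _).div_const _) (Eventually.of_forall fun w => ?_)
  refine (norm_exp_I_sub_le (2 * q) (A w)).trans (le_of_eq ?_)
  rw [pow_mul, sq_abs, ← pow_mul]

/-- Two bounded variables with equal moments up to the even order `2 q` have characteristic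
functions that differ by at most twice the `2 q`-th Taylor term. -/
lemma charFun_compare {Ω Ω' : Type*} {mΩ : MeasurableSpace Ω} {mΩ' : MeasurableSpace Ω'}
    (μ : Measure Ω) (μ' : Measure Ω') [IsProbabilityMeasure μ] [IsProbabilityMeasure μ']
    (A : Ω → ℝ) (B : Ω' → ℝ) (hA : Measurable A) (hB : Measurable B) (K : ℝ)
    (hAK : ∀ w, |A w| ≤ K) (hBK : ∀ w, |B w| ≤ K) (q : ℕ)
    (hmom : ∀ j ≤ 2 * q, ∫ w, A w ^ j ∂μ = ∫ w, B w ^ j ∂μ') :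
    ‖∫ w, Complex.exp (A w * Complex.I) ∂μ - ∫ w, Complex.exp (B w * Complex.I) ∂μ'‖
      ≤ 2 * ((∫ w, B w ^ (2 * q) ∂μ') / (2 * q).factorial) := by
  have h1 := charFun_taylor μ A hA K hAK q
  have h2 := charFun_taylor μ' B hB K hBK q
  have e : ∑ j ∈ Finset.range (2 * q),
        ((∫ w, A w ^ j ∂μ : ℝ) : ℂ) * (Complex.I ^ j / (j.factorial : ℂ))
      = ∑ j ∈ Finset.range (2 * q),
        ((∫ w, B w ^ j ∂μ' : ℝ) : ℂ) * (Complex.I ^ j / (j.factorial : ℂ)) :=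
    Finset.sum_congr rfl fun j hj => by rw [hmom j (Finset.mem_range.1 hj).le]
  rw [e, hmom _ le_rfl] at h1
  rw [← dist_eq_norm] at h1 h2 ⊢
  rw [two_mul]
  exact (dist_triangle_right _ _ _).trans (add_le_add h1 h2)

lemma norm_exp_I_sub_exp_I_le (a b : ℝ) :
    ‖Complex.exp (a * Complex.I) - Complex.exp (b * Complex.I)‖ ≤ |a - b| := by
  have h : Complex.exp (a * Complex.I) - Complex.exp (b * Complex.I)
      = Complex.exp (b * Complex.I) * (Complex.exp (Complex.I * ((a - b : ℝ) : ℂ)) - 1) := by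
    rw [mul_sub, ← Complex.exp_add, mul_one]
    congr 2
    push_cast; ring
  rw [h, norm_mul, Complex.norm_exp_ofReal_mul_I, one_mul]
  exact Real.norm_exp_I_mul_ofReal_sub_one_le

/-- The characteristic function is 1-Lipschitz with respect to the `L¹` distance. -/
lemma norm_integral_exp_sub_le {Ω : Type*} {mΩ : MeasurableSpace Ω} (μ : Measure Ω)
    [IsProbabilityMeasure μ] (A B D : Ω → ℝ) (hA : Measurable A) (hB : Measurable B)
    (hD : Integrable D μ) (h : ∀ w, |A w - B w| ≤ D w) :
    ‖∫ w, Complex.exp (A w * Complex.I) ∂μ - ∫ w, Complex.exp (B w * Complex.I) ∂μ‖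
      ≤ ∫ w, D w ∂μ := by
  have hexp : ∀ A : Ω → ℝ, Measurable A → Integrable (fun w => Complex.exp (A w * Complex.I)) μ :=
    fun A hA => by
      have hAC : Measurable fun w => (A w : ℂ) := Complex.measurable_ofReal.comp hA
      exact Integrable.of_bound (by fun_prop) 1
        (Eventually.of_forall fun w => by rw [Complex.norm_exp_ofReal_mul_I])
  rw [← integral_sub (hexp A hA) (hexp B hB)]
  exact norm_integral_le_of_norm_le hD (Eventually.of_forall fun w =>
    (norm_exp_I_sub_exp_I_le _ _).trans (h w))

/-! ### The independent model -/

section Model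

open ProbabilityTheory

lemma model_indep {p : ℝ → ℝ} (hp : Measurable p) :
    iIndepFun (fun (k : ℕ) (u : ℕ → ℝ) => p (u k)) unifProd :=
  iIndepFun_infinitePi (P := fun _ : ℕ => unif) (X := fun _ => p) fun _ => hp

lemma model_integral {p : ℝ → ℝ} (hp : Measurable p) (k : ℕ) :
    ∫ u, p (u k) ∂unifProd = ∫ x, p x ∂unif := by
  have h := measurePreserving_eval_infinitePi (fun _ : ℕ => unif) k
  rw [← h.map_eq, integral_map (measurable_pi_apply k).aemeasurable
    hp.aestronglyMeasurable]

lemma model_identDistrib {p : ℝ → ℝ} (hp : Measurable p) (k : ℕ) :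
    IdentDistrib (fun u : ℕ → ℝ => p (u k)) (fun u => p (u 0)) unifProd unifProd := by
  have h := fun k => measurePreserving_eval_infinitePi (fun _ : ℕ => unif) k
  have : IdentDistrib (fun u : ℕ → ℝ => u k) (fun u => u 0) unifProd unifProd :=
    ⟨(measurable_pi_apply k).aemeasurable, (measurable_pi_apply 0).aemeasurable,
      (h k).map_eq.trans (h 0).map_eq.symm⟩
  exact this.comp hp

/-- Hoeffding's inequality bounds the even moments of normalized sums of independent variables,
uniformly in the number of summands; the `2 q`-th Taylor term decays geometrically in `q`. -/
lemma model_moment_le {p : ℝ → ℝ} (hp : Measurable p) {K : ℝ} (hK : ∀ x, |p x| ≤ K)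
    (hmean : ∫ x, p x ∂unif = 0) (I : Finset ℕ) (N : ℕ) (hN : 0 < N) (hI : I.card ≤ N) (t : ℝ) (q : ℕ) :
    (∫ u, (t / √N * ∑ k ∈ I, p (u k)) ^ (2 * q) ∂unifProd) / (2 * q).factorial
      ≤ 2 * (1 / 4) ^ q * exp (2 * t ^ 2 * K ^ 2) := by
  have hN' : (0 : ℝ) < N := by positivity
  have hK0 : 0 ≤ K := (abs_nonneg _).trans (hK 0)
  have hsub : ∀ k ∈ I, HasSubgaussianMGF (fun u : ℕ → ℝ => p (u k))
      ((‖K - (-K)‖₊ / 2) ^ 2) unifProd := fun k _ =>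
    hasSubgaussianMGF_of_mem_Icc_of_integral_eq_zero
      (hp.comp (measurable_pi_apply k)).aemeasurable
      (Eventually.of_forall fun u => abs_le.1 (hK (u k))) ((model_integral hp k).trans hmean)
  have hS := HasSubgaussianMGF.sum_of_iIndepFun (model_indep hp) hsub
  set S : (ℕ → ℝ) → ℝ := fun u => ∑ k ∈ I, p (u k) with hSdef
  have hSm : Measurable S := Finset.measurable_fun_sum _ fun k _ => hp.comp (measurable_pi_apply k)
  have hmgf : ∀ s : ℝ, s ^ 2 = 4 * t ^ 2 / N →
      ∫ u, exp (s * S u) ∂unifProd ≤ exp (2 * t ^ 2 * K ^ 2) := by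
    intro s hs
    refine (hS.mgf_le s).trans (exp_le_exp.2 ?_)
    have e : ((∑ _k ∈ I, (‖K - (-K)‖₊ / 2) ^ 2 : NNReal) : ℝ) = I.card * K ^ 2 := by
      rw [Finset.sum_const, nsmul_eq_mul]
      push_cast
      rw [show K - -K = 2 * K by ring, Real.norm_eq_abs, abs_of_nonneg (by linarith)]
      ring
    rw [e, hs]
    have hI' : (I.card : ℝ) ≤ N := by exact_mod_cast hI
    calc (I.card : ℝ) * K ^ 2 * (4 * t ^ 2 / N) / 2
        ≤ N * K ^ 2 * (4 * t ^ 2 / N) / 2 := by gcongr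
      _ = 2 * t ^ 2 * K ^ 2 := by field_simp; ring
  set s : ℝ := 2 * (t / √N) with hs
  have hs2 : s ^ 2 = 4 * t ^ 2 / N := by
    rw [hs, mul_pow, div_pow, Real.sq_sqrt hN'.le]; ring
  have h1 := hmgf s hs2
  have h2 := hmgf (-s) (by rw [neg_sq, hs2])
  have hi1 := hS.integrable_exp_mul s
  have hi2 := hS.integrable_exp_mul (-s)
  rw [← integral_div]
  have hpt : ∀ u, (t / √N * S u) ^ (2 * q) / (2 * q).factorial
      ≤ (1 / 4) ^ q * (exp (s * S u) + exp (-s * S u)) := by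
    intro u
    have e : (t / √N * S u) ^ (2 * q) = (1 / 4) ^ q * |s * S u| ^ (2 * q) := by
      rw [pow_mul, pow_mul |s * S u|, sq_abs, ← mul_pow]
      congr 1
      rw [hs]; ring
    rw [e, mul_div_assoc]
    gcongr
    refine (Real.pow_div_factorial_le_exp _ (abs_nonneg _) _).trans ?_
    rcases abs_choice (s * S u) with h | h <;> rw [h]
    · linarith [exp_pos (-s * S u)]
    · rw [← neg_mul]; linarith [exp_pos (s * S u)]
  calc ∫ u, (t / √N * S u) ^ (2 * q) / (2 * q).factorial ∂unifProd
      ≤ ∫ u, (1 / 4) ^ q * (exp (s * S u) + exp (-s * S u)) ∂unifProd := by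
        refine integral_mono_of_nonneg (Eventually.of_forall fun u => ?_)
          ((hi1.add hi2).const_mul _) (Eventually.of_forall hpt)
        have : 0 ≤ (t / √N * S u) ^ (2 * q) := by rw [pow_mul]; positivity
        positivity
    _ = (1 / 4) ^ q * (∫ u, exp (s * S u) ∂unifProd + ∫ u, exp (-s * S u) ∂unifProd) := by
        rw [integral_const_mul, integral_add hi1 hi2]
    _ ≤ (1 / 4) ^ q * (exp (2 * t ^ 2 * K ^ 2) + exp (2 * t ^ 2 * K ^ 2)) := by gcongr
    _ = _ := by ring

/-- The classical central limit theorem, in terms of characteristic functions. -/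
lemma model_clt {p : ℝ → ℝ} (hp : Measurable p) {K : ℝ} (hK : ∀ x, |p x| ≤ K)
    (hmean : ∫ x, p x ∂unif = 0) (t : ℝ) :
    Tendsto (fun N : ℕ => ∫ u, Complex.exp
        (((t / √N * ∑ k ∈ Finset.range N, p (u k) : ℝ) : ℂ) * Complex.I) ∂unifProd) atTop
      (𝓝 (Complex.exp ((-(t ^ 2 * (∫ x, p x ^ 2 ∂unif) / 2) : ℝ) : ℂ))) := by
  have hm0 : ∫ u, p (u 0) ∂unifProd = 0 := (model_integral hp 0).trans hmean
  have hmeas : ∀ k, Measurable fun u : ℕ → ℝ => p (u k) := fun k => hp.comp (measurable_pi_apply k)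
  have hvar : Var[fun u : ℕ → ℝ => p (u 0); unifProd] = ∫ x, p x ^ 2 ∂unif := by
    rw [variance_eq_integral (hmeas 0).aemeasurable, hm0]
    simp only [sub_zero]
    exact model_integral (p := fun x => p x ^ 2) (hp.pow_const 2) 0
  have hY : HasLaw (id : ℝ → ℝ)
      (gaussianReal 0 Var[fun u : ℕ → ℝ => p (u 0); unifProd].toNNReal)
      (gaussianReal 0 Var[fun u : ℕ → ℝ => p (u 0); unifProd].toNNReal) := HasLaw.id
  have h := tendstoInDistribution_inv_sqrt_mul_sum_sub (P := unifProd)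
    (X := fun (k : ℕ) (u : ℕ → ℝ) => p (u k)) hY
    (MemLp.of_bound (hmeas 0).aestronglyMeasurable K (Eventually.of_forall fun u => hK (u 0)))
    (model_indep hp) (model_identDistrib hp)
  have h2 := ProbabilityMeasure.tendsto_iff_tendsto_charFun.1 h.tendsto t
  simp only [ProbabilityMeasure.coe_mk, Measure.map_id, charFun_gaussianReal] at h2
  rw [hvar] at h2
  have hnn : 0 ≤ ∫ x, p x ^ 2 ∂unif := integral_nonneg fun x => sq_nonneg _
  have e2 : Complex.exp ((-(t ^ 2 * (∫ x, p x ^ 2 ∂unif) / 2) : ℝ) : ℂ)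
      = Complex.exp (t * (0 : ℝ) * Complex.I
        - (((∫ x, p x ^ 2 ∂unif).toNNReal : ℝ) : ℂ) * t ^ 2 / 2) := by
    rw [Real.coe_toNNReal _ hnn]
    congr 1; push_cast; ring
  rw [e2]
  refine h2.congr fun N => ?_
  rw [charFun_apply_real, integral_map]
  · congr 1
    ext u
    rw [hm0]
    congr 1
    push_cast
    ring
  · exact (Measurable.const_mul ((Finset.measurable_fun_sum _ fun k _ => hmeas k).sub_const _)
      _).aemeasurable
  · exact (by fun_prop : Continuous fun x : ℝ => Complex.exp (t * x * Complex.I)).aestronglyMeasurable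

end Model

/-! ### Sparse resonances -/

lemma NonRes.mono {n : ℕ → ℕ} {I : Finset ℕ} {R R' L L' : ℕ} (h : NonRes n I R L)
    (hR : R' ≤ R) (hL : L' ≤ L) : NonRes n I R' L' := fun b h1 h2 h3 =>
  h b (h1.trans hR) (fun k hk => (h2 k hk).trans (by exact_mod_cast hL)) h3

/-- The number `⌊N^{1/4}⌋` of smallest elements discarded from the first `N` terms. -/
def disc (N : ℕ) : ℕ := Nat.sqrt (Nat.sqrt N)

open Classical in
/-- The indices `k < N` for which `n k` is not among the `disc N` smallest elements. -/
def good (n : ℕ → ℕ) (N : ℕ) : Finset ℕ :=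
  (Finset.range N).filter fun k => ¬ AmongSmallest n (disc N) k

lemma mem_good {n : ℕ → ℕ} {N k : ℕ} :
    k ∈ good n N ↔ k < N ∧ ¬ AmongSmallest n (disc N) k := by
  simp [good]

lemma good_subset (n : ℕ → ℕ) (N : ℕ) : good n N ⊆ Finset.range N := fun _ hk =>
  Finset.mem_range.2 (mem_good.1 hk).1

lemma card_sdiff_good {n : ℕ → ℕ} (hn : Function.Injective n) (N : ℕ) :
    (Finset.range N \ good n N).card ≤ disc N := by
  classical
  set F := Finset.range N \ good n N with hF
  have hmem : ∀ k ∈ F, AmongSmallest n (disc N) k := by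
    intro k hk
    rw [hF, Finset.mem_sdiff, good, Finset.mem_filter] at hk
    by_contra h
    exact hk.2 ⟨hk.1, h⟩
  rcases F.eq_empty_or_nonempty with h0 | hne
  · rw [h0]; simp
  · obtain ⟨k, hk, hmax⟩ := F.exists_max_image n hne
    have hfin : {j : ℕ | n j ≤ n k}.Finite :=
      (Set.finite_Iic (n k)).preimage hn.injOn
    have hsub : (F : Set ℕ) ⊆ {j : ℕ | n j ≤ n k} := fun j hj => hmax j hj
    have := Set.ncard_le_ncard hsub hfin
    rw [Set.ncard_coe_finset] at this
    exact this.trans (hmem k hk)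

lemma tendsto_disc : Tendsto disc atTop atTop := by
  have hs : Tendsto Nat.sqrt atTop atTop :=
    tendsto_atTop_atTop.2 fun b => ⟨b * b, fun a ha => Nat.le_sqrt.2 ha⟩
  exact hs.comp hs

lemma disc_mul_le (N : ℕ) : (disc N : ℝ) * disc N ≤ √N := by
  apply Real.le_sqrt_of_sq_le
  have h1 : disc N * disc N ≤ Nat.sqrt N := Nat.sqrt_le _
  have h2 : Nat.sqrt N * Nat.sqrt N ≤ N := Nat.sqrt_le _
  have h3 := (Nat.mul_le_mul h1 h1).trans h2
  rw [sq]
  exact_mod_cast h3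

lemma tendsto_disc_div : Tendsto (fun N : ℕ => (disc N : ℝ) / √N) atTop (𝓝 0) := by
  have h : Tendsto (fun N : ℕ => ((disc N : ℝ))⁻¹) atTop (𝓝 0) :=
    tendsto_inv_atTop_zero.comp (tendsto_natCast_atTop_atTop.comp tendsto_disc)
  refine squeeze_zero (fun N => by positivity) (fun N => ?_) h
  rcases Nat.eq_zero_or_pos (disc N) with h0 | h0
  · simp [h0]
  · have h0' : (0 : ℝ) < disc N := by exact_mod_cast h0
    have := disc_mul_le N
    have hs : 0 < √(N : ℝ) := (by positivity : (0 : ℝ) < disc N * disc N).trans_le this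
    rw [div_le_iff₀ hs, inv_mul_eq_div, le_div_iff₀ h0']
    exact this

lemma pow_four_le (N : ℕ) (h : 2 ≤ disc N) : N ^ 4 ≤ disc N ^ 32 := by
  have h1 : N < (Nat.sqrt N + 1) ^ 2 := Nat.lt_succ_sqrt' N
  have h2 : Nat.sqrt N < (disc N + 1) ^ 2 := Nat.lt_succ_sqrt' _
  have h3 : disc N + 1 ≤ disc N ^ 2 := by nlinarith
  calc N ^ 4 ≤ (((disc N ^ 2) ^ 2) ^ 2) ^ 4 := by
        gcongr
        refine h1.le.trans ?_
        gcongr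
        refine (Nat.succ_le_of_lt h2).trans ?_
        gcongr
    _ = disc N ^ 32 := by ring

/-- Condition `A_ω` excludes all short relations with polynomially bounded coefficients among the
`n k` with `k` good. -/
lemma nonRes_good {ω : ℕ → ℝ} (hω_top : Tendsto ω atTop atTop) {n : ℕ → ℕ}
    (hn_pos : ∀ k, 0 < n k) (hA : CondA ω n) (R : ℕ) :
    ∀ᶠ N in atTop, NonRes n (good n N) R (N ^ 4) := by
  obtain ⟨N₀, hA⟩ := hA
  filter_upwards [tendsto_disc.eventually_ge_atTop N₀, tendsto_disc.eventually_ge_atTop 2,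
    (hω_top.comp tendsto_disc).eventually_ge_atTop (max (R : ℝ) 32)] with N h1 h2 h3
  intro b hcard hb hsum k₀ hk₀
  by_contra hne
  set S := (good n N).filter fun k => b k ≠ 0 with hS
  have hk₀S : k₀ ∈ S := Finset.mem_filter.2 ⟨hk₀, hne⟩
  have hsumS : ∑ k ∈ S, b k * (n k : ℤ) = 0 := by
    rw [← hsum, hS, Finset.sum_filter]
    refine Finset.sum_congr rfl fun k _ => ?_
    by_cases h : b k = 0 <;> simp [h]
  have hr : 2 ≤ S.card := by
    by_contra hlt
    have hpos : 0 < S.card := Finset.card_pos.2 ⟨k₀, hk₀S⟩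
    obtain ⟨x, hx⟩ := Finset.card_eq_one.1 (by omega : S.card = 1)
    rw [hx, Finset.mem_singleton] at hk₀S
    rw [hx, Finset.sum_singleton, ← hk₀S] at hsumS
    have := hn_pos k₀
    rcases mul_eq_zero.1 hsumS with h | h
    · exact hne h
    · omega
  have hω := h3
  simp only [Function.comp] at hω
  have hM1 : (1 : ℝ) ≤ disc N := by exact_mod_cast (by omega : 1 ≤ disc N)
  have hres := hA (disc N) h1 S.card (fun i => (S.equivFin.symm i : ℕ))
    (fun i => b (S.equivFin.symm i)) hr
    ((by exact_mod_cast hcard : (S.card : ℝ) ≤ R).trans ((le_max_left _ _).trans hω))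
    (fun i j hij => S.equivFin.symm.injective (Subtype.ext hij))
    (fun i => (Finset.mem_filter.1 (S.equivFin.symm i).2).2)
    (fun i => by
      have hbi := hb _ (Finset.mem_filter.1 (S.equivFin.symm i).2).1
      have h4 : (|((b (S.equivFin.symm i) : ℤ) : ℝ)|) ≤ ((N ^ 4 : ℕ) : ℝ) := by
        exact_mod_cast hbi
      refine h4.trans ?_
      have h5 : ((N ^ 4 : ℕ) : ℝ) ≤ ((disc N ^ 32 : ℕ) : ℝ) := by
        exact_mod_cast pow_four_le N h2
      refine h5.trans ?_
      push_cast
      rw [← Real.rpow_natCast]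
      exact Real.rpow_le_rpow_of_exponent_le hM1 (by
        push_cast; exact (le_max_right _ _).trans hω))
    (by
      rw [← hsumS, ← Finset.sum_coe_sort S (fun k => b k * (n k : ℤ))]
      exact Equiv.sum_comp S.equivFin.symm (fun k : S => b k * (n k : ℤ)))
  have hk := hres (S.equivFin ⟨k₀, hk₀S⟩)
  simp only [Equiv.symm_apply_apply] at hk
  exact (mem_good.1 hk₀).2 hk

/-! ### Trigonometric polynomials -/

/-- Central limit theorem for dilates of a real trigonometric polynomial, along good indices. -/
lemma trig_clt {n : ℕ → ℕ} (hn : Function.Injective n)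
    (hNR : ∀ R, ∀ᶠ N in atTop, NonRes n (good n N) R (N ^ 4))
    {p : ℝ → ℝ} (J : Finset ℤ) (c : ℤ → ℂ) (hpc : ∀ x, (p x : ℂ) = ∑ j ∈ J, c j * ee j x)
    (hmean : ∫ x, p x ∂unif = 0) (t : ℝ) :
    Tendsto (fun N : ℕ => ∫ x, Complex.exp
        (((t / √N * ∑ k ∈ good n N, p (n k * x) : ℝ) : ℂ) * Complex.I) ∂unif) atTop
      (𝓝 (Complex.exp ((-(t ^ 2 * (∫ x, p x ^ 2 ∂unif) / 2) : ℝ) : ℂ))) := by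
  have hpcont : Continuous p := by
    have h1 : Continuous fun x => (p x : ℂ) := by
      simp_rw [hpc]
      exact continuous_finsetSum _ fun j _ => continuous_const.mul (continuous_ee j)
    have : p = fun x => ((p x : ℂ)).re := by ext x; simp
    rw [this]
    exact Complex.continuous_re.comp h1
  have hp : Measurable p := hpcont.measurable
  set K : ℝ := ∑ j ∈ J, ‖c j‖ with hKdef
  have hK0 : 0 ≤ K := Finset.sum_nonneg fun j _ => norm_nonneg _
  have hK : ∀ x, |p x| ≤ K := by
    intro x
    rw [← Real.norm_eq_abs, ← Complex.norm_real, hpc]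
    exact (norm_sum_le _ _).trans (Finset.sum_le_sum fun j _ => by simp [norm_ee])
  have hbsum : ∀ (s : Finset ℕ) (y : ℕ → ℝ), |∑ k ∈ s, p (y k)| ≤ s.card * K := fun s y =>
    (Finset.abs_sum_le_sum_abs _ _).trans
      ((Finset.sum_le_card_nsmul _ _ K fun k _ => hK _).trans (by rw [nsmul_eq_mul]))
  set A : ℕ → ℝ → ℝ := fun N x => t / √N * ∑ k ∈ good n N, p (n k * x) with hA
  set B : ℕ → (ℕ → ℝ) → ℝ := fun N u => t / √N * ∑ k ∈ good n N, p (u k) with hB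
  set B' : ℕ → (ℕ → ℝ) → ℝ := fun N u => t / √N * ∑ k ∈ Finset.range N, p (u k) with hB'
  have hmA : ∀ N, Measurable (A N) := fun N =>
    (Finset.measurable_fun_sum _ fun k _ => hp.comp (measurable_const_mul _)).const_mul _
  have hmS : ∀ s : Finset ℕ, Measurable fun u : ℕ → ℝ => ∑ k ∈ s, p (u k) := fun s =>
    Finset.measurable_fun_sum _ fun k _ => hp.comp (measurable_pi_apply k)
  have hlim := model_clt hp hK hmean t
  -- the discarded indices do not matter in the independent model
  have hBB' : Tendsto (fun N => ∫ u, Complex.exp (B N u * Complex.I) ∂unifProd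
      - ∫ u, Complex.exp (B' N u * Complex.I) ∂unifProd) atTop (𝓝 0) := by
    have hz : Tendsto (fun N : ℕ => |t| * K * ((disc N : ℝ) / √N)) atTop (𝓝 0) := by
      simpa using tendsto_disc_div.const_mul (|t| * K)
    refine squeeze_zero_norm (fun N => ?_) hz
    refine (norm_integral_exp_sub_le unifProd (B N) (B' N)
      (fun _ => |t| * K * ((disc N : ℝ) / √N)) ((hmS _).const_mul _)
      ((hmS _).const_mul _) (integrable_const _) fun u => ?_).trans (by simp)
    have e : B N u - B' N u = -(t / √N * ∑ k ∈ Finset.range N \ good n N, p (u k)) := by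
      simp only [hB, hB']
      rw [← Finset.sum_sdiff (good_subset n N)]; ring
    rw [e, abs_neg, abs_mul, abs_div, abs_of_nonneg (Real.sqrt_nonneg _)]
    have h1 := hbsum (Finset.range N \ good n N) u
    have h2 : ((Finset.range N \ good n N).card : ℝ) ≤ disc N := by
      exact_mod_cast card_sdiff_good hn N
    calc |t| / √N * |∑ k ∈ Finset.range N \ good n N, p (u k)|
        ≤ |t| / √N * (disc N * K) := by
          gcongr; exact h1.trans (by gcongr)
      _ = _ := by ring
  -- all moments of fixed order eventually agree with those of the independent model
  have hAB : Tendsto (fun N => ∫ x, Complex.exp (A N x * Complex.I) ∂unif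
      - ∫ u, Complex.exp (B N u * Complex.I) ∂unifProd) atTop (𝓝 0) := by
    rw [Metric.tendsto_atTop']
    intro ε hε
    have hgeo : Tendsto (fun q : ℕ => 2 * (2 * (1 / 4 : ℝ) ^ q * exp (2 * t ^ 2 * K ^ 2)))
        atTop (𝓝 0) := by
      have := ((tendsto_pow_atTop_nhds_zero_of_lt_one (r := (1 / 4 : ℝ)) (by norm_num)
        (by norm_num)).const_mul 2).mul_const (exp (2 * t ^ 2 * K ^ 2)) |>.const_mul 2
      simpa using this
    obtain ⟨q, hq⟩ := (hgeo.eventually (gt_mem_nhds hε)).exists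
    set T := J.sup Int.natAbs with hT
    have hJT : ∀ j ∈ J, |j| ≤ (T : ℤ) := fun j hj => by
      have := Finset.le_sup (f := Int.natAbs) hj
      rw [Int.abs_eq_natAbs]; exact_mod_cast this
    obtain ⟨N₁, hN₁⟩ := eventually_atTop.1 (((hNR (2 * q)).and
      (eventually_ge_atTop (2 * q * T))).and (eventually_ge_atTop 1))
    refine ⟨N₁, fun N hN => ?_⟩
    obtain ⟨⟨h1, h2⟩, h3⟩ := hN₁ N hN.le
    have hN4 : N ≤ N ^ 4 := Nat.le_self_pow (by norm_num) N
    have hmom : ∀ m ≤ 2 * q, ∫ x, A N x ^ m ∂unif = ∫ u, B N u ^ m ∂unifProd := by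
      intro m hm
      have hme := moment_eq (h1.mono hm le_rfl) J hJT
        ((Nat.mul_le_mul_right T hm).trans (h2.trans hN4)) c
      simp_rw [← hpc] at hme
      have hme' : ∫ x, (∑ k ∈ good n N, p (n k * x)) ^ m ∂unif
          = ∫ u, (∑ k ∈ good n N, p (u k)) ^ m ∂unifProd := by
        apply Complex.ofReal_injective
        rw [← integral_complex_ofReal, ← integral_complex_ofReal]
        push_cast
        exact hme
      simp only [hA, hB, mul_pow]
      rw [integral_const_mul, integral_const_mul, hme']
    have hbound : ∀ y : ℕ → ℝ, |t / √N * ∑ k ∈ good n N, p (y k)|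
        ≤ |t / √N| * ((good n N).card * K) := fun y => by
      rw [abs_mul]; gcongr; exact hbsum _ _
    have hcmp := charFun_compare unif unifProd (A N) (B N) (hmA N) ((hmS _).const_mul _)
      (|t / √N| * ((good n N).card * K)) (fun x => hbound fun k => n k * x)
      (fun u => hbound u) q hmom
    have hmb := model_moment_le hp hK hmean (good n N) N h3
      ((Finset.card_le_card (good_subset n N)).trans (by simp)) t q
    rw [dist_zero_right]
    refine hcmp.trans_lt (lt_of_le_of_lt ?_ hq)
    gcongr
  have := (hAB.add hBB').add hlim
  simp only [zero_add] at this
  refine this.congr fun N => ?_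
  simp only [hA, hB']
  ring

/-! ### Approximation by Fourier partial sums -/

/-- Fourier partial sums over symmetric windows are real valued. -/
lemma fs_win_real (f : ℝ → ℝ) (T : ℕ) (x : ℝ) : (((fs f (win T) x).re : ℝ) : ℂ) = fs f (win T) x := by
  rw [← Complex.conj_eq_iff_re, fs, map_sum]
  refine Finset.sum_nbij' (fun j => -j) (fun j => -j) ?_ ?_ ?_ ?_ ?_
  · intro j hj; simp only [win, Finset.mem_Icc] at hj ⊢; omega
  · intro j hj; simp only [win, Finset.mem_Icc] at hj ⊢; omega
  · intro j _; simp
  · intro j _; simp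
  · intro j _
    rw [map_mul, conj_fc, conj_ee]

lemma norm_fs_le (f : ℝ → ℝ) (J : Finset ℤ) (x : ℝ) : ‖fs f J x‖ ≤ ∑ j ∈ J, ‖fc f j‖ :=
  (norm_sum_le _ _).trans (Finset.sum_le_sum fun j _ => by simp [norm_ee])

lemma win_mono {S T : ℕ} (h : S ≤ T) : win S ⊆ win T := by
  intro j hj; simp only [win, Finset.mem_Icc] at hj ⊢; omega

/-- On a probability space, the mean of a function is at most its `L²` norm. -/
lemma integral_le_sqrt {Ω : Type*} {mΩ : MeasurableSpace Ω} (μ : Measure Ω)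
    [IsProbabilityMeasure μ] {G : Ω → ℝ} (hG : Integrable G μ)
    (hG2 : Integrable (fun w => G w ^ 2) μ) {c : ℝ} (h : ∫ w, G w ^ 2 ∂μ ≤ c) :
    ∫ w, G w ∂μ ≤ √c := by
  apply Real.le_sqrt_of_sq_le
  refine le_trans ?_ h
  set m := ∫ w, G w ∂μ with hm
  have h0 : 0 ≤ ∫ w, (G w - m) ^ 2 ∂μ := integral_nonneg fun w => sq_nonneg _
  have e : ∫ w, (G w - m) ^ 2 ∂μ = ∫ w, G w ^ 2 ∂μ - m ^ 2 := by
    have : ∀ w, (G w - m) ^ 2 = G w ^ 2 - (2 * m * G w - m ^ 2) := fun w => by ring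
    simp_rw [this]
    have hi : Integrable (fun w => 2 * m * G w - m ^ 2) μ :=
      (hG.const_mul _).sub (integrable_const _)
    rw [integral_sub hG2 hi, integral_sub (hG.const_mul _) (integrable_const _), integral_const_mul, ← hm]
    simp; ring
  linarith

lemma integrable_of_bdd_norm {F : ℝ → ℂ} (hF : Measurable F) {K : ℝ} (hK : ∀ x, ‖F x‖ ≤ K) :
    Integrable (fun x => ‖F x‖) unif ∧ Integrable (fun x => ‖F x‖ ^ 2) unif := by
  constructor
  · exact Integrable.of_bound (C := K) hF.norm.aestronglyMeasurable
      (Eventually.of_forall fun x => by simpa using hK x)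
  · refine Integrable.of_bound (C := K ^ 2) (hF.norm.pow_const 2).aestronglyMeasurable
      (Eventually.of_forall fun x => ?_)
    rw [norm_pow, norm_norm]
    gcongr
    exact hK x

/-- The far Fourier tail of `f`, summed without using any orthogonality. -/
lemma integral_far_le {f : ℝ → ℝ} (hf : Measurable f) {K : ℝ} (hK : ∀ x, |f x| ≤ K)
    (hper : ∀ x, f (x + 1) = f x) {n : ℕ → ℕ} (hn_pos : ∀ k, 0 < n k) (I : Finset ℕ)
    (J : Finset ℤ) :
    ∫ x, ‖∑ k ∈ I, ((f (n k * x) : ℂ) - fs f J (n k * x))‖ ∂unif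
      ≤ √((I.card : ℝ) ^ 2 * (∫ x, f x ^ 2 ∂unif - ∑ j ∈ J, ‖fc f j‖ ^ 2)) := by
  set F : ℝ → ℂ := fun x => (f x : ℂ) - fs f J x with hFdef
  have hF : Measurable F :=
    (Complex.measurable_ofReal.comp hf).sub (continuous_fs f J).measurable
  set K' : ℝ := K + ∑ j ∈ J, ‖fc f j‖ with hK'
  have hFK : ∀ x, ‖F x‖ ≤ K' := by
    intro x
    refine (norm_sub_le _ _).trans (add_le_add (by simpa using hK x) (norm_fs_le f J x))
  have hFper : ∀ x, F (x + 1) = F x := by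
    intro x; simp only [hFdef, hper, fs, ee_add_one]
  have hSm : Measurable fun x => ∑ k ∈ I, F (n k * x) :=
    Finset.measurable_fun_sum _ fun k _ => hF.comp (measurable_const_mul _)
  have hSK : ∀ x, ‖∑ k ∈ I, F (n k * x)‖ ≤ I.card * K' := fun x =>
    (norm_sum_le _ _).trans
      ((Finset.sum_le_card_nsmul _ _ K' fun k _ => hFK _).trans (by rw [nsmul_eq_mul]))
  obtain ⟨i1, i2⟩ := integrable_of_bdd_norm hSm hSK
  refine integral_le_sqrt unif i1 i2 ?_
  have hk : ∀ k, Integrable (fun x => ‖F (n k * x)‖ ^ 2) unif := fun k =>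
    (integrable_of_bdd_norm (hF.comp (measurable_const_mul (n k : ℝ))) fun x => hFK _).2
  have hint : ∀ k, ∫ x, ‖F (n k * x)‖ ^ 2 ∂unif
      = ∫ x, f x ^ 2 ∂unif - ∑ j ∈ J, ‖fc f j‖ ^ 2 := by
    intro k
    rw [← integral_normSq_sub_fs hf hK J]
    refine integral_comp_natMul (fun x => ‖F x‖ ^ 2) (fun x => by simp only [hFper]) ?_ (n k)
      (hn_pos k)
    intro a b
    rw [intervalIntegrable_iff]
    refine Measure.integrableOn_of_bounded (M := K' ^ 2) measure_Ioc_lt_top.ne (hF.norm.pow_const 2).aestronglyMeasurable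
      (Eventually.of_forall fun x => ?_)
    rw [norm_pow, norm_norm]
    gcongr
    exact hFK x
  calc ∫ x, ‖∑ k ∈ I, F (n k * x)‖ ^ 2 ∂unif
      ≤ ∫ x, (I.card : ℝ) * ∑ k ∈ I, ‖F (n k * x)‖ ^ 2 ∂unif := by
        refine integral_mono i2 ((integrable_finsetSum _ fun k _ => hk k).const_mul _) fun x => ?_
        refine le_trans ?_ sq_sum_le_card_mul_sum_sq
        simp only
        gcongr
        exact norm_sum_le _ _
    _ = _ := by
        rw [integral_const_mul, integral_finsetSum _ fun k _ => hk k]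
        simp_rw [hint]
        rw [Finset.sum_const, nsmul_eq_mul]; ring

/-- The intermediate block of frequencies: relations of length two being excluded, the frequencies
`j * n k` are pairwise distinct and the dilates are orthogonal. -/
lemma integral_mid_le {f : ℝ → ℝ} {n : ℕ → ℕ} (hn_pos : ∀ k, 0 < n k) {I : Finset ℕ} {L : ℕ}
    (hNR : NonRes n I 2 L) (J : Finset ℤ) (hJ : ∀ j ∈ J, j ≠ 0 ∧ |j| ≤ L) :
    ∫ x, ‖∑ k ∈ I, fs f J (n k * x)‖ ∂unif ≤ √(I.card * ∑ j ∈ J, ‖fc f j‖ ^ 2) := by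
  have hSm : Measurable fun x => ∑ k ∈ I, fs f J (n k * x) :=
    Finset.measurable_fun_sum _ fun k _ =>
      (continuous_fs f J).measurable.comp (measurable_const_mul _)
  have hSK : ∀ x, ‖∑ k ∈ I, fs f J (n k * x)‖ ≤ I.card * ∑ j ∈ J, ‖fc f j‖ := fun x =>
    (norm_sum_le _ _).trans
      ((Finset.sum_le_card_nsmul _ _ _ fun k _ => norm_fs_le f J _).trans (by rw [nsmul_eq_mul]))
  obtain ⟨i1, i2⟩ := integrable_of_bdd_norm hSm hSK
  refine integral_le_sqrt unif i1 i2 (le_of_eq ?_)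
  have hpt : ∀ x, ∑ k ∈ I, fs f J (n k * x)
      = ∑ v ∈ I ×ˢ J, fc f v.2 * ee (v.2 * n v.1) x := by
    intro x
    rw [Finset.sum_product]
    refine Finset.sum_congr rfl fun k _ => Finset.sum_congr rfl fun j _ => ?_
    rw [ee_natMul]
  simp_rw [hpt]
  rw [integral_normSq_sum (I ×ˢ J) (fun v => v.2 * (n v.1 : ℤ)) ?_ (fun v => fc f v.2),
    Finset.sum_product]
  · simp
  · rintro ⟨k, j⟩ hv ⟨k', j'⟩ hv' heq
    simp only [Finset.coe_product, Set.mem_prod, Finset.mem_coe] at hv hv' heq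
    have hkpos : (n k : ℤ) ≠ 0 := by exact_mod_cast (hn_pos k).ne'
    by_cases hkk : k = k'
    · subst hkk
      rw [mul_right_cancel₀ hkpos heq]
    · exfalso
      classical
      set b : ℕ → ℤ := fun i => (if i = k then j else 0) - (if i = k' then j' else 0) with hb
      have h1 : (I.filter fun i => b i ≠ 0).card ≤ 2 := by
        refine (Finset.card_le_card (t := {k, k'}) fun i hi => ?_).trans Finset.card_le_two
        rw [Finset.mem_filter] at hi
        by_contra hni
        simp only [Finset.mem_insert, Finset.mem_singleton, not_or] at hni
        exact hi.2 (by simp [hb, hni.1, hni.2])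
      have h2 : ∀ i ∈ I, |b i| ≤ L := by
        intro i _
        have a1 := (hJ j hv.2).2
        have a2 := (hJ j' hv'.2).2
        simp only [hb]
        split_ifs with c1 c2 c2
        · exact absurd (c1.symm.trans c2) hkk
        · simpa using a1
        · simpa using a2
        · simp
      have h3 : ∑ i ∈ I, b i * (n i : ℤ) = 0 := by
        simp only [hb, sub_mul, ite_mul, zero_mul, Finset.sum_sub_distrib, Finset.sum_ite_eq',
          hv.1, hv'.1, if_true]
        linarith
      have h4 := hNR b h1 h2 h3 k hv.1
      simp only [hb, if_true, if_neg hkk, sub_zero] at h4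
      exact (hJ j hv.2).1 h4

/-- Convergence of the characteristic functions of the normalized sums, by `L²` approximation of `f`
by its Fourier partial sums. -/
lemma charFun_tendsto {n : ℕ → ℕ} (hn_pos : ∀ k, 0 < n k) (hn : Function.Injective n)
    (hNR : ∀ R, ∀ᶠ N in atTop, NonRes n (good n N) R (N ^ 4))
    {f : ℝ → ℝ} (hf : Measurable f) {K : ℝ} (hK : ∀ x, |f x| ≤ K)
    (hper : ∀ x, f (x + 1) = f x) (hbv : BoundedVariationOn f (Set.Icc 0 1))
    (hmean : ∫ x, f x ∂unif = 0) (t : ℝ) :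
    Tendsto (fun N : ℕ => ∫ x, Complex.exp
        (((t / √N * ∑ k ∈ Finset.range N, f (n k * x) : ℝ) : ℂ) * Complex.I) ∂unif) atTop
      (𝓝 (Complex.exp ((-(t ^ 2 * (∫ x, f x ^ 2 ∂unif) / 2) : ℝ) : ℂ))) := by
  have hK0 : 0 ≤ K := (abs_nonneg _).trans (hK 0)
  obtain ⟨C, hC0, hC⟩ := exists_tail_bound hf hK hbv
  set V : ℝ := ∫ x, f x ^ 2 ∂unif with hV
  set W : ℕ → ℝ := fun T => ∑ j ∈ win T, ‖fc f j‖ ^ 2 with hW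
  have hWV : ∀ T, W T ≤ V := fun T =>
    sum_le_hasSum _ (fun j _ => by positivity) (hasSum_fc hf hK)
  have hCto : Tendsto (fun T : ℕ => C / √(T : ℝ)) atTop (𝓝 0) :=
    (tendsto_const_nhds).div_atTop (Real.tendsto_sqrt_atTop.comp tendsto_natCast_atTop_atTop)
  have htail : Tendsto (fun T => V - W T) atTop (𝓝 0) := by
    refine squeeze_zero' (Eventually.of_forall fun T => sub_nonneg.2 (hWV T)) ?_ hCto
    filter_upwards [eventually_gt_atTop 0] with T hT
    exact hC T hT
  have hWto : Tendsto W atTop (𝓝 V) := by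
    have := (tendsto_const_nhds (x := V)).sub htail
    simpa using this
  set φ : ℕ → ℂ := fun N => ∫ x, Complex.exp
        (((t / √N * ∑ k ∈ Finset.range N, f (n k * x) : ℝ) : ℂ) * Complex.I) ∂unif with hφ
  set P : ℕ → ℝ → ℝ := fun T x => (fs f (win T) x).re with hP
  have hPc : ∀ T x, (P T x : ℂ) = ∑ j ∈ win T, fc f j * ee j x := fun T x => fs_win_real f T x
  have hPcont : ∀ T, Continuous (P T) := fun T => Complex.continuous_re.comp (continuous_fs f _)
  have hfc0 : fc f 0 = 0 := by
    have : fc f 0 = ((∫ x, f x ∂unif : ℝ) : ℂ) := by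
      rw [fc, ← integral_complex_ofReal]
      simp [ee_zero]
    rw [this, hmean, Complex.ofReal_zero]
  have hPmean : ∀ T, ∫ x, P T x ∂unif = 0 := by
    intro T
    apply Complex.ofReal_injective
    rw [← integral_complex_ofReal]
    simp_rw [hPc]
    rw [integral_finsetSum _ fun j _ => (integrable_ee j _).const_mul _]
    simp_rw [integral_const_mul, integral_ee]
    simp [hfc0]
  have hPsq : ∀ T, ∫ x, P T x ^ 2 ∂unif = W T := by
    intro T
    have := integral_normSq_sum (win T) (fun j => j) (fun _ _ _ _ h => h) (fc f)
    simp only [hW]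
    rw [← this]
    refine integral_congr_ae (Eventually.of_forall fun x => ?_)
    simp only [← hPc, Complex.norm_real, Real.norm_eq_abs, sq_abs]
  set ψ : ℕ → ℕ → ℂ := fun T N => ∫ x, Complex.exp
        (((t / √N * ∑ k ∈ good n N, P T (n k * x) : ℝ) : ℂ) * Complex.I) ∂unif with hψ
  have hψlim : ∀ T, Tendsto (ψ T) atTop
      (𝓝 (Complex.exp ((-(t ^ 2 * W T / 2) : ℝ) : ℂ))) := by
    intro T
    have := trig_clt hn hNR (win T) (fc f) (hPc T) (hPmean T) t
    rwa [hPsq] at this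
  -- replacing `f` by a partial sum costs `|t| √(V - W T)` asymptotically
  have hcmp : ∀ T, ∀ᶠ N in atTop, ‖φ N - ψ T N‖
      ≤ |t| * K * ((disc N : ℝ) / √N) + |t| * √C * (1 / √N) + |t| * √(V - W T) := by
    intro T
    filter_upwards [hNR 2, eventually_ge_atTop (max T 1)] with N hres hN
    have hN1 : 1 ≤ N := (le_max_right _ _).trans hN
    have hNT : T ≤ N ^ 4 := ((le_max_left _ _).trans hN).trans (Nat.le_self_pow (by norm_num) N)
    have hNpos : (0 : ℝ) < N := by exact_mod_cast hN1
    have hsN : 0 < √(N : ℝ) := Real.sqrt_pos.2 hNpos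
    set I := good n N with hI
    set J := win (N ^ 4) \ win T with hJ
    set G : ℝ → ℝ := fun x => ‖∑ k ∈ I, ((f (n k * x) : ℂ) - fs f (win (N ^ 4)) (n k * x))‖ with hG
    set H : ℝ → ℝ := fun x => ‖∑ k ∈ I, fs f J (n k * x)‖ with hH
    have hIcard : (I.card : ℝ) ≤ N := by
      exact_mod_cast (Finset.card_le_card (good_subset n N)).trans (by simp)
    have hGint : ∫ x, G x ∂unif ≤ √C := by
      refine (integral_far_le hf hK hper hn_pos I (win (N ^ 4))).trans (Real.sqrt_le_sqrt ?_)
      have h1 := hC (N ^ 4) (by positivity)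
      have h2 : √((N ^ 4 : ℕ) : ℝ) = (N : ℝ) ^ 2 := by
        rw [Real.sqrt_eq_iff_mul_self_eq (by positivity) (by positivity)]
        push_cast; ring
      rw [h2] at h1
      have h3 : 0 ≤ V - W (N ^ 4) := sub_nonneg.2 (hWV _)
      calc (I.card : ℝ) ^ 2 * (V - W (N ^ 4)) ≤ (N : ℝ) ^ 2 * (C / (N : ℝ) ^ 2) := by
            gcongr
        _ = C := by field_simp
    have hHint : ∫ x, H x ∂unif ≤ √N * √(V - W T) := by
      refine (integral_mid_le hn_pos hres J ?_).trans ?_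
      · intro j hj
        simp only [hJ, win, Finset.mem_sdiff, Finset.mem_Icc] at hj
        constructor
        · rintro rfl; exact hj.2 ⟨by omega, by omega⟩
        · rw [abs_le]; exact hj.1
      · rw [← Real.sqrt_mul hNpos.le]
        refine Real.sqrt_le_sqrt ?_
        have h1 : ∑ j ∈ J, ‖fc f j‖ ^ 2 = W (N ^ 4) - W T := by
          rw [eq_sub_iff_add_eq]
          exact Finset.sum_sdiff (win_mono hNT)
        have h2 : 0 ≤ ∑ j ∈ J, ‖fc f j‖ ^ 2 := Finset.sum_nonneg fun j _ => by positivity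
        have h3 := hWV (N ^ 4)
        gcongr
        linarith
    have hGm : Integrable G unif := by
      refine (integrable_of_bdd_norm (K := I.card * (K + ∑ j ∈ win (N ^ 4), ‖fc f j‖))
        (Finset.measurable_fun_sum _ fun k _ => ((Complex.measurable_ofReal.comp hf).sub
        (continuous_fs f _).measurable).comp (measurable_const_mul _)) fun x => ?_).1
      refine (norm_sum_le _ _).trans ((Finset.sum_le_card_nsmul _ _ _ fun k _ => ?_).trans
        (by rw [nsmul_eq_mul]))
      refine (norm_sub_le _ _).trans (add_le_add (by simpa using hK _) (norm_fs_le f _ _))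
    have hHm : Integrable H unif := by
      refine (integrable_of_bdd_norm (K := I.card * ∑ j ∈ J, ‖fc f j‖)
        (Finset.measurable_fun_sum _ fun k _ => (continuous_fs f _).measurable.comp
          (measurable_const_mul _)) fun x => ?_).1
      refine (norm_sum_le _ _).trans ((Finset.sum_le_card_nsmul _ _ _ fun k _ => ?_).trans
        (by rw [nsmul_eq_mul]))
      exact norm_fs_le f J _
    have hpt : ∀ x, |t / √N * ∑ k ∈ Finset.range N, f (n k * x)
        - t / √N * ∑ k ∈ I, P T (n k * x)| ≤ |t| / √N * (K * disc N + G x + H x) := by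
      intro x
      rw [← mul_sub, abs_mul, abs_div, abs_of_pos hsN]
      gcongr
      have e1 : ∑ k ∈ Finset.range N, f (n k * x) - ∑ k ∈ I, P T (n k * x)
          = ∑ k ∈ Finset.range N \ I, f (n k * x) + ∑ k ∈ I, (f (n k * x) - P T (n k * x)) := by
        rw [Finset.sum_sub_distrib, ← Finset.sum_sdiff (good_subset n N)]; ring
      have e2 : |∑ k ∈ Finset.range N \ I, f (n k * x)| ≤ K * disc N := by
        have h2 : ((Finset.range N \ I).card : ℝ) ≤ disc N := by
          exact_mod_cast card_sdiff_good hn N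
        refine (Finset.abs_sum_le_sum_abs _ _).trans
          ((Finset.sum_le_card_nsmul _ _ K fun k _ => hK _).trans ?_)
        rw [nsmul_eq_mul, mul_comm]
        gcongr
      have e3 : |∑ k ∈ I, (f (n k * x) - P T (n k * x))| ≤ G x + H x := by
        rw [← Real.norm_eq_abs, ← Complex.norm_real]
        refine le_trans (le_of_eq ?_) (norm_add_le _ _)
        rw [← Finset.sum_add_distrib]
        push_cast
        congr 1
        refine Finset.sum_congr rfl fun k _ => ?_
        have h1 : fs f J (n k * x) + fs f (win T) (n k * x) = fs f (win (N ^ 4)) (n k * x) :=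
          Finset.sum_sdiff (win_mono hNT)
        have h2 : (P T (n k * x) : ℂ) = fs f (win T) (n k * x) := hPc T _
        rw [h2, ← h1]; ring
      rw [e1]
      exact (abs_add_le _ _).trans (by linarith)
    have hmain := norm_integral_exp_sub_le unif
      (fun x => t / √N * ∑ k ∈ Finset.range N, f (n k * x))
      (fun x => t / √N * ∑ k ∈ I, P T (n k * x))
      (fun x => |t| / √N * (K * disc N + G x + H x))
      ((Finset.measurable_fun_sum _ fun k _ => hf.comp (measurable_const_mul _)).const_mul _)
      ((Finset.measurable_fun_sum _ fun k _ =>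
        (hPcont T).measurable.comp (measurable_const_mul _)).const_mul _)
      ((((integrable_const _).add hGm).add hHm).const_mul _) hpt
    refine hmain.trans ?_
    have hi : Integrable (fun x => K * disc N + G x) unif := (integrable_const _).add hGm
    rw [integral_const_mul, integral_add hi hHm,
      integral_add (integrable_const _) hGm]
    simp only [integral_const, probReal_univ, one_smul]
    calc |t| / √N * (K * disc N + ∫ x, G x ∂unif + ∫ x, H x ∂unif)
        ≤ |t| / √N * (K * disc N + √C + √N * √(V - W T)) := by gcongr
      _ = _ := by field_simp
  rw [Metric.tendsto_nhds]
  intro ε hε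
  have hlimW : Tendsto (fun T => Complex.exp ((-(t ^ 2 * W T / 2) : ℝ) : ℂ)) atTop
      (𝓝 (Complex.exp ((-(t ^ 2 * V / 2) : ℝ) : ℂ))) :=
    (Continuous.tendsto (f := fun w : ℝ => Complex.exp ((-(t ^ 2 * w / 2) : ℝ) : ℂ))
      (by fun_prop) V).comp hWto
  have hsq : Tendsto (fun T => |t| * √(V - W T)) atTop (𝓝 0) := by
    have := ((Real.continuous_sqrt.tendsto 0).comp htail).const_mul |t|
    simpa using this
  obtain ⟨T, hT1, hT2⟩ := ((Metric.tendsto_nhds.1 hlimW (ε / 4) (by positivity)).and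
    (hsq.eventually (gt_mem_nhds (show (0 : ℝ) < ε / 4 by positivity)))).exists
  have hsmall : Tendsto (fun N : ℕ => |t| * K * ((disc N : ℝ) / √N) + |t| * √C * (1 / √N))
      atTop (𝓝 0) := by
    have h1 := tendsto_disc_div.const_mul (|t| * K)
    have h2 : Tendsto (fun N : ℕ => 1 / √(N : ℝ)) atTop (𝓝 0) :=
      tendsto_const_nhds.div_atTop (Real.tendsto_sqrt_atTop.comp tendsto_natCast_atTop_atTop)
    simpa using h1.add (h2.const_mul (|t| * √C))
  filter_upwards [hcmp T, Metric.tendsto_nhds.1 (hψlim T) (ε / 4) (by positivity),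
    hsmall.eventually (gt_mem_nhds (show (0 : ℝ) < ε / 4 by positivity))] with N h1 h2 h3
  have h4 : dist (φ N) (ψ T N) < ε / 2 := by rw [dist_eq_norm]; linarith
  have h5 := dist_triangle4 (φ N) (ψ T N) (Complex.exp ((-(t ^ 2 * W T / 2) : ℝ) : ℂ))
    (Complex.exp ((-(t ^ 2 * V / 2) : ℝ) : ℂ))
  linarith

/-! ### Lévy continuity -/

lemma exists_bound {f : ℝ → ℝ} (hper : ∀ x, f (x + 1) = f x)
    (hbv : BoundedVariationOn f (Set.Icc 0 1)) : ∃ K, ∀ x, |f x| ≤ K := by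
  refine ⟨|f 0| + (eVariationOn f (Set.Icc 0 1)).toReal, fun x => ?_⟩
  have hp : Function.Periodic f 1 := hper
  have h1 : f (Int.fract x) = f x := by
    have := hp.sub_zsmul_eq ⌊x⌋ (x := x)
    rw [← this, Int.fract]; simp
  have h2 := hbv.dist_le (x := Int.fract x) (y := 0)
    ⟨Int.fract_nonneg x, (Int.fract_lt_one x).le⟩ ⟨le_rfl, zero_le_one⟩
  rw [h1, Real.dist_eq] at h2
  have h3 := abs_sub_abs_le_abs_sub (f x) (f 0)
  linarith

/-- Theorem 2 (CLT part of Theorem 1 of the paper): under Condition `A_ω`, for every `f` of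
bounded variation, 1-periodic and of mean zero, `N^{-1/2} ∑_{k<N} f(n_k x)` converges in
distribution (for `x` uniform on `(0,1)`) to the Gaussian law with mean `0` and
variance `‖f‖² = ∫₀¹ f²`. -/
theorem statement2
    (ω : ℕ → ℝ) (hω_pos : ∀ k, 0 < ω k) (hω_mono : Monotone ω)
    (hω_top : Tendsto ω atTop atTop)
    (n : ℕ → ℕ) (hn_pos : ∀ k, 0 < n k) (hn_inj : Function.Injective n)
    (hA : CondA ω n)
    (f : ℝ → ℝ) (hf_meas : Measurable f)
    (hf_per : ∀ x, f (x + 1) = f x)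
    (hf_int : ∫ x in (0:ℝ)..1, f x = 0)
    (hf_bv : BoundedVariationOn f (Set.Icc 0 1)) :
    ∀ g : BoundedContinuousFunction ℝ ℝ,
      Tendsto (fun N : ℕ => ∫ x in Set.Ioo (0:ℝ) 1,
          g ((∑ k ∈ Finset.range N, f (n k * x)) / Real.sqrt N))
        atTop
        (𝓝 (∫ y, g y ∂(ProbabilityTheory.gaussianReal 0
            (Real.toNNReal (∫ x in (0:ℝ)..1, f x ^ 2))))) := by
  intro g
  obtain ⟨K, hK⟩ := exists_bound hf_per hf_bv
  have hmean : ∫ x, f x ∂unif = 0 := by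
    rw [← hf_int, intervalIntegral.integral_of_le zero_le_one]
  have hV : ∫ x in (0:ℝ)..1, f x ^ 2 = ∫ x, f x ^ 2 ∂unif := by
    rw [intervalIntegral.integral_of_le zero_le_one]
  have hNR := nonRes_good hω_top hn_pos hA
  set X : ℕ → ℝ → ℝ := fun N x => (∑ k ∈ Finset.range N, f (n k * x)) / Real.sqrt N with hX
  have hXm : ∀ N, Measurable (X N) := fun N =>
    (Finset.measurable_fun_sum _ fun k _ => hf_meas.comp (measurable_const_mul _)).div_const _
  let μs : ℕ → ProbabilityMeasure ℝ := fun N =>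
    ⟨Measure.map (X N) unif, Measure.isProbabilityMeasure_map (hXm N).aemeasurable⟩
  let ν : ProbabilityMeasure ℝ :=
    ⟨ProbabilityTheory.gaussianReal 0 (Real.toNNReal (∫ x in (0:ℝ)..1, f x ^ 2)), inferInstance⟩
  have hconv : Tendsto μs atTop (𝓝 ν) := by
    rw [ProbabilityMeasure.tendsto_iff_tendsto_charFun]
    intro t
    have h := charFun_tendsto hn_pos hn_inj hNR hf_meas hK hf_per hf_bv hmean t
    have hν : charFun (ν : Measure ℝ) t
        = Complex.exp ((-(t ^ 2 * (∫ x, f x ^ 2 ∂unif) / 2) : ℝ) : ℂ) := by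
      simp only [ν, ProbabilityMeasure.coe_mk, ProbabilityTheory.charFun_gaussianReal]
      rw [hV, Real.coe_toNNReal _ (integral_nonneg fun x => sq_nonneg _)]
      congr 1
      push_cast
      ring
    rw [hν]
    refine h.congr fun N => ?_
    simp only [μs, ProbabilityMeasure.coe_mk]
    rw [charFun_apply_real, integral_map (hXm N).aemeasurable (by fun_prop)]
    refine integral_congr_ae (Eventually.of_forall fun x => ?_)
    simp only [hX]
    push_cast
    congr 1
    ring
  have hg := (ProbabilityMeasure.tendsto_iff_forall_integral_tendsto.1 hconv) g
  refine hg.congr fun N => ?_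
  simp only [μs, ProbabilityMeasure.coe_mk]
  rw [integral_map (hXm N).aemeasurable g.continuous.measurable.aestronglyMeasurable,
    integral_Ioc_eq_integral_Ioo]
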